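/- arXiv:1810.00920 — 2 statements merged into one kernel-verified Lean document; each statement's English description precedes it below -/
import Mathlib

section
/- Let n > 2k and k ≥ 4. Every intersecting family F ⊆ C([n],k) with γ(F) ≥ 2 satisfies |F| ≤ C(n-1,k-1) - C(n-k-1,k-1) - C(n-k-2,k-2) + 2. Moreover, for k ≥ 5 equality is attained only by families isomorphic to J_2. -/
open Finset

/-- The degree of an element `i` in a family `F`. -/
def deg (F : Finset (Finset ℕ)) (i : ℕ) : ℕ := (F.filter (fun S => i ∈ S)).card

/-- The maximal degree `Δ(F)` of a family `F ⊆ 2^[n]`. -/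
def maxDeg (n : ℕ) (F : Finset (Finset ℕ)) : ℕ := (Finset.Icc 1 n).sup (deg F)

/-- The diversity `γ(F) = |F| - Δ(F)`. -/
def diversity (n : ℕ) (F : Finset (Finset ℕ)) : ℕ := F.card - maxDeg n F

/-- The family `J_i = {I_1, I_i} ∪ {F ∈ C([n],k) : 1 ∈ F, F ∩ I_1 ≠ ∅, F ∩ I_i ≠ ∅}`,
where `I_1 = [2,k+1]` and `I_i = [i+1,k+i]`. -/
def Jfam (n k i : ℕ) : Finset (Finset ℕ) :=
  {Finset.Icc 2 (k + 1), Finset.Icc (i + 1) (k + i)} ∪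
    ((Finset.Icc 1 n).powersetCard k).filter
      (fun F => 1 ∈ F ∧ (F ∩ Finset.Icc 2 (k + 1)).Nonempty ∧
        (F ∩ Finset.Icc (i + 1) (k + i)).Nonempty)

/-- Two families over the ground set `[n]` are isomorphic if one is obtained from the other
by a permutation of the ground set. -/
def isoFam (n : ℕ) (F G : Finset (Finset ℕ)) : Prop :=
  ∃ σ : Equiv.Perm ℕ, (∀ x, x ∈ Finset.Icc 1 n ↔ σ x ∈ Finset.Icc 1 n) ∧
    G = F.image (fun S => S.image σ)

/-!
Call the number of members of `F` that avoid `c` the codegree of `c`; diversity at least `2` says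
that all codegrees are at least `2`. By Pascal's rule and
inclusion–exclusion the bound is `2` plus the number of `k`-sets containing `c` and meeting two
fixed `k`-sets `G`, `H` that avoid `c` and satisfy `|G ∪ H| = k + 1`:
`C(n-1,k-1) - 2 C(n-k-1,k-1) + C(n-k-2,k-1) + 2`.

If some codegree equals `2`, then `F` lies in the family determined by `c` and the two members
`G`, `H` avoiding `c`, which is largest exactly when `|G ∪ H| = k + 1`, that is, for `J_2`.

If all codegrees exceed `2`, shift `F`. When a shift would bring a codegree down to `2`, at most two
members avoid both of the elements involved; splitting `F` by these two elements then reduces to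
bounds for cross-intersecting pairs, which may themselves be shifted. Otherwise the process ends in
a shifted family. Shiftedness makes any two members meet inside `[2k]`, so the traces on `[2k]`
again form intersecting families, one for each size `i ≤ k`. For `i < k` these are bounded by the
number of `i`-sets containing `1` and meeting the two smallest members that avoid `1`, and for
`i = k` by pairing complementary sets. Weighting slice `i` by `C(n-2k, k-i)` and summing gives the
bound, and equality in it forces equality in slice `k - 1`, hence codegree `2` at `1`.
-/

open scoped FinsetFamily

section SetFamilies

variable {α : Type*} [DecidableEq α]

/-- Every member of `U` meets every member of `V`; a family `F` is intersecting when
`CrossIntersecting F F`. -/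
def CrossIntersecting (U V : Finset (Finset α)) : Prop :=
  ∀ A ∈ U, ∀ B ∈ V, (A ∩ B).Nonempty

/-- The `r`-element subsets of `X` that meet every member of `𝓖`. -/
def transversals (X : Finset α) (r : ℕ) (𝓖 : Finset (Finset α)) : Finset (Finset α) :=
  {S ∈ X.powersetCard r | ∀ G ∈ 𝓖, (S ∩ G).Nonempty}

/-- The `i`-element members of the trace of `U` on `Y`, that is, of `{A ∩ Y | A ∈ U}`. -/
def traceSlice (Y : Finset α) (i : ℕ) (U : Finset (Finset α)) : Finset (Finset α) :=
  (U.image (· ∩ Y)) # i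

variable {U V F 𝓖 𝓗 𝒮 : Finset (Finset α)} {X Y : Finset α} {a r : ℕ}

lemma CrossIntersecting.symm (h : CrossIntersecting U V) : CrossIntersecting V U :=
  fun B hB A hA ↦ inter_comm A B ▸ h A hA B hB

lemma CrossIntersecting.subset_transversals (h : CrossIntersecting U V)
    (hU : U ⊆ X.powersetCard r) (h𝓖 : 𝓖 ⊆ V) : U ⊆ transversals X r 𝓖 :=
  fun A hA ↦ mem_filter.2 ⟨hU hA, fun G hG ↦ h A hA G (h𝓖 hG)⟩

lemma card_filter_inter_eq {S : Finset α} (hSY : S ⊆ Y) (hYX : Y ⊆ X) (hSa : #S ≤ a) :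
    #{A ∈ X.powersetCard a | A ∩ Y = S} = (#X - #Y).choose (a - #S) := by
  have himage : {A ∈ X.powersetCard a | A ∩ Y = S} =
      ((X \ Y).powersetCard (a - #S)).image (S ∪ ·) := by
    ext A
    simp only [mem_filter, mem_powersetCard, mem_image]
    constructor
    · rintro ⟨⟨hAX, rfl⟩, rfl⟩
      exact ⟨A \ Y, ⟨sdiff_subset_sdiff hAX subset_rfl, by grind⟩, by grind⟩
    · rintro ⟨R, ⟨hRX, hR⟩, rfl⟩
      have hdisj : Disjoint S R := disjoint_sdiff.mono hSY hRX
      refine ⟨⟨by grind, by rw [card_union_of_disjoint hdisj]; omega⟩, by grind⟩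
  rw [himage, card_image_of_injOn, card_powersetCard, card_sdiff_of_subset hYX]
  have hdisj : ∀ R ∈ (X \ Y).powersetCard (a - #S), Disjoint S R := fun R hR ↦
    disjoint_sdiff.mono hSY (mem_powersetCard.1 hR).1
  intro R hR R' hR' (h : S ∪ R = S ∪ R')
  rw [← union_sdiff_cancel_left (hdisj R hR), h, union_sdiff_cancel_left (hdisj R' hR')]

lemma card_filter_inter_mem (h𝒮 : 𝒮 ⊆ Y.powerset) (hYX : Y ⊆ X) (a : ℕ) :
    #{A ∈ X.powersetCard a | A ∩ Y ∈ 𝒮} =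
      ∑ i ∈ range (a + 1), #(𝒮 # i) * (#X - #Y).choose (a - i) := by
  have hmaps : ∀ A ∈ {A ∈ X.powersetCard a | A ∩ Y ∈ 𝒮}, A ∩ Y ∈ {S ∈ 𝒮 | #S ∈ range (a + 1)} := by
    intro A hA
    rw [mem_filter, mem_powersetCard] at hA
    have := card_le_card (inter_subset_left : A ∩ Y ⊆ A)
    exact mem_filter.2 ⟨hA.2, by simp only [mem_range]; omega⟩
  have hfiber : ∀ S ∈ {S ∈ 𝒮 | #S ∈ range (a + 1)},
      #{A ∈ {A ∈ X.powersetCard a | A ∩ Y ∈ 𝒮} | A ∩ Y = S} = (#X - #Y).choose (a - #S) := by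
    intro S hS
    rw [mem_filter, mem_range, Nat.lt_succ_iff] at hS
    rw [← card_filter_inter_eq (mem_powerset.1 (h𝒮 hS.1)) hYX hS.2, filter_filter]
    congr 1
    exact filter_congr fun A _ ↦ ⟨fun h ↦ h.2, fun h ↦ ⟨h ▸ hS.1, h⟩⟩
  rw [card_eq_sum_card_fiberwise hmaps, sum_congr rfl hfiber,
    ← sum_fiberwise_of_maps_to (g := card) (t := range (a + 1)) fun S hS ↦ (mem_filter.1 hS).2]
  refine sum_congr rfl fun i hi ↦ ?_
  have hslice : {S ∈ {S ∈ 𝒮 | #S ∈ range (a + 1)} | #S = i} = 𝒮 # i := by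
    ext S
    simp only [mem_filter, mem_slice]
    exact ⟨fun h ↦ ⟨h.1.1, h.2⟩, fun h ↦ ⟨⟨h.1, h.2 ▸ hi⟩, h.2⟩⟩
  rw [hslice, sum_congr rfl fun S hS ↦ by rw [(mem_slice.1 hS).2], sum_const, smul_eq_mul]

lemma traceSlice_subset (Y : Finset α) (i : ℕ) (U : Finset (Finset α)) :
    traceSlice Y i U ⊆ Y.powersetCard i := by
  intro S hS
  obtain ⟨hS, hcard⟩ := mem_slice.1 hS
  obtain ⟨A, -, rfl⟩ := mem_image.1 hS
  exact mem_powersetCard.2 ⟨inter_subset_right, hcard⟩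

lemma card_le_sum_card_traceSlice (hU : U ⊆ X.powersetCard a) (hYX : Y ⊆ X) :
    #U ≤ ∑ i ∈ range (a + 1), #(traceSlice Y i U) * (#X - #Y).choose (a - i) := by
  have htrace : U.image (· ∩ Y) ⊆ Y.powerset :=
    image_subset_iff.2 fun A _ ↦ mem_powerset.2 inter_subset_right
  refine (card_le_card fun A hA ↦ ?_).trans_eq (card_filter_inter_mem htrace hYX a)
  exact mem_filter.2 ⟨hU hA, mem_image_of_mem _ hA⟩

lemma card_transversals_eq_sum (h𝓖 : ∀ G ∈ 𝓖, G ⊆ Y) (hYX : Y ⊆ X) (a : ℕ) :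
    #(transversals X a 𝓖) =
      ∑ i ∈ range (a + 1), #(transversals Y i 𝓖) * (#X - #Y).choose (a - i) := by
  have hmeet : ∀ A, (∀ G ∈ 𝓖, (A ∩ G).Nonempty) ↔ ∀ G ∈ 𝓖, (A ∩ Y ∩ G).Nonempty := fun A ↦
    forall₂_congr fun G hG ↦ by rw [inter_assoc, inter_eq_right.2 (h𝓖 G hG)]
  have hslice : ∀ i, {S ∈ Y.powerset | ∀ G ∈ 𝓖, (S ∩ G).Nonempty} # i = transversals Y i 𝓖 := by
    intro i
    ext S
    simp only [transversals, mem_filter, mem_powersetCard, mem_slice, mem_powerset]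
    tauto
  simp only [← hslice]
  rw [← card_filter_inter_mem (filter_subset _ _) hYX a, transversals]
  congr 1
  refine filter_congr fun A _ ↦ ?_
  rw [mem_filter, mem_powerset, hmeet]
  exact (and_iff_right inter_subset_right).symm

lemma card_transversals_add_card_biUnion (X : Finset α) (r : ℕ) (𝓖 : Finset (Finset α)) :
    #(transversals X r 𝓖) + #(𝓖.biUnion fun G ↦ (X \ G).powersetCard r) = (#X).choose r := by
  have hcompl : 𝓖.biUnion (fun G ↦ (X \ G).powersetCard r) =
      {S ∈ X.powersetCard r | ¬ ∀ G ∈ 𝓖, (S ∩ G).Nonempty} := by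
    ext S
    simp only [mem_biUnion, mem_powersetCard, mem_filter, subset_sdiff, not_forall,
      not_nonempty_iff_eq_empty, ← disjoint_iff_inter_eq_empty]
    tauto
  rw [hcompl, transversals, card_filter_add_card_filter_not, card_powersetCard]

lemma card_transversals_singleton {G : Finset α} (hG : G ⊆ X) (r : ℕ) :
    #(transversals X r {G}) + (#X - #G).choose r = (#X).choose r := by
  rw [← card_transversals_add_card_biUnion X r {G}, singleton_biUnion, card_powersetCard,
    card_sdiff_of_subset hG]

lemma card_transversals_pair {G H : Finset α} (hG : G ⊆ X) (hH : H ⊆ X) (r : ℕ) :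
    #(transversals X r {G, H}) + ((#X - #G).choose r + (#X - #H).choose r) =
      (#X).choose r + (#X - #(G ∪ H)).choose r := by
  have hinter : (X \ G).powersetCard r ∩ (X \ H).powersetCard r =
      (X \ (G ∪ H)).powersetCard r := by
    ext S
    simp only [mem_inter, mem_powersetCard, sdiff_union_distrib, subset_inter_iff]
    tauto
  have hunion := card_union_add_card_inter ((X \ G).powersetCard r) ((X \ H).powersetCard r)
  have hcompl := card_transversals_add_card_biUnion X r {G, H}
  rw [biUnion_insert, singleton_biUnion] at hcompl
  simp only [hinter, card_powersetCard, card_sdiff_of_subset hG, card_sdiff_of_subset hH,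
    card_sdiff_of_subset (union_subset hG hH)] at hunion
  omega

lemma card_transversals_pair_of_card_union {G H : Finset α} (hG : G ∈ X.powersetCard a)
    (hH : H ∈ X.powersetCard a) (hGH : #(G ∪ H) = a + 1) (r : ℕ) :
    #(transversals X r {G, H}) + 2 * (#X - a).choose r =
      (#X).choose r + (#X - (a + 1)).choose r := by
  rw [mem_powersetCard] at hG hH
  rw [← hGH, ← card_transversals_pair hG.1 hH.1, hG.2, hH.2, two_mul]

lemma inter_singleton_nonempty {S : Finset α} {c : α} : (S ∩ {c}).Nonempty ↔ c ∈ S := by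
  simp only [Finset.Nonempty, mem_inter, mem_singleton, exists_eq_right]

lemma card_transversals_insert_singleton {c : α} (hc : c ∈ X) (h𝓖 : ∀ G ∈ 𝓖, c ∉ G) (r : ℕ) :
    #(transversals X (r + 1) (insert {c} 𝓖)) = #(transversals (X.erase c) r 𝓖) := by
  have himage : transversals X (r + 1) (insert {c} 𝓖) =
      (transversals (X.erase c) r 𝓖).image (insert c) := by
    ext S
    simp only [transversals, mem_filter, mem_powersetCard, mem_image, forall_mem_insert,
      inter_singleton_nonempty]
    constructor
    · rintro ⟨⟨hSX, hS⟩, hcS, hmeet⟩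
      refine ⟨S.erase c, ⟨⟨erase_subset_erase c hSX, by rw [card_erase_of_mem hcS]; omega⟩,
        fun G hG ↦ ?_⟩, insert_erase hcS⟩
      rw [erase_inter, erase_eq_of_notMem fun h ↦ h𝓖 G hG (mem_inter.1 h).2]
      exact hmeet G hG
    · rintro ⟨R, ⟨⟨hRX, rfl⟩, hmeet⟩, rfl⟩
      refine ⟨⟨insert_subset hc (hRX.trans (erase_subset c X)),
        card_insert_of_notMem fun h ↦ notMem_erase c X (hRX h)⟩, mem_insert_self c R,
        fun G hG ↦ (hmeet G hG).mono (inter_subset_inter_right (subset_insert c R))⟩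
  have hnotMem : ∀ R ∈ transversals (X.erase c) r 𝓖, c ∉ R := fun R hR h ↦
    notMem_erase c X ((mem_powersetCard.1 (mem_filter.1 hR).1).1 h)
  rw [himage, card_image_of_injOn]
  intro R hR R' hR' (h : insert c R = insert c R')
  rw [← erase_insert (hnotMem R hR), h, erase_insert (hnotMem R' hR')]

lemma card_transversals_le_add_card (hX : #X = 2 * a) (h𝓖 : 𝓖 ⊆ X.powersetCard a)
    (𝓗 : Finset (Finset α)) :
    #(transversals X a 𝓗) ≤ #(transversals X a (𝓗 ∪ 𝓖)) + #𝓖 := by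
  have hcover : transversals X a 𝓗 ⊆ transversals X a (𝓗 ∪ 𝓖) ∪ 𝓖.image (X \ ·) := by
    intro S hS
    obtain ⟨hSa, hmeet⟩ := mem_filter.1 hS
    by_cases hS𝓖 : ∀ G ∈ 𝓖, (S ∩ G).Nonempty
    · exact mem_union_left _ (mem_filter.2 ⟨hSa, fun G hG ↦
        (mem_union.1 hG).elim (hmeet G) (hS𝓖 G)⟩)
    · push Not at hS𝓖
      obtain ⟨G, hG, hSG⟩ := hS𝓖
      rw [mem_powersetCard] at hSa
      obtain ⟨hGX, hGa⟩ := mem_powersetCard.1 (h𝓖 hG)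
      have hSsub : S ⊆ X \ G := subset_sdiff.2 ⟨hSa.1, disjoint_iff_inter_eq_empty.2 hSG⟩
      refine mem_union_right _ (mem_image.2 ⟨G, hG, (eq_of_subset_of_card_le hSsub ?_).symm⟩)
      rw [card_sdiff_of_subset hGX]
      omega
  calc #(transversals X a 𝓗) ≤ #(transversals X a (𝓗 ∪ 𝓖)) + #(𝓖.image (X \ ·)) :=
        (card_le_card hcover).trans (card_union_le _ _)
    _ ≤ #(transversals X a (𝓗 ∪ 𝓖)) + #𝓖 := Nat.add_le_add_left card_image_le _

lemma CrossIntersecting.card_add_card_le_choose (h : CrossIntersecting U V)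
    (hU : U ⊆ X.powersetCard a) (hV : V ⊆ X.powersetCard a) (hX : #X = 2 * a) :
    #U + #V ≤ (#X).choose a := by
  have hcompl : Set.InjOn (X \ ·) (U : Set (Finset α)) := fun A hA B hB (hAB : X \ A = X \ B) ↦ by
    rw [← Finset.sdiff_sdiff_eq_self (mem_powersetCard.1 (hU hA)).1, hAB,
      Finset.sdiff_sdiff_eq_self (mem_powersetCard.1 (hU hB)).1]
  have hdisj : Disjoint (U.image (X \ ·)) V := by
    rw [disjoint_left]
    rintro _ hB hBV
    obtain ⟨A, hA, rfl⟩ := mem_image.1 hB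
    exact (h A hA _ hBV).ne_empty (inter_sdiff_self A X)
  rw [← card_image_of_injOn hcompl, ← card_union_of_disjoint hdisj, ← card_powersetCard]
  refine card_le_card (union_subset (image_subset_iff.2 fun A hA ↦ ?_) hV)
  obtain ⟨hAX, hA⟩ := mem_powersetCard.1 (hU hA)
  exact mem_powersetCard.2 ⟨sdiff_subset, by rw [card_sdiff_of_subset hAX]; omega⟩

lemma exists_subset_of_forall_transversals_meet {P : Finset α} (h𝓖 : ∀ G ∈ 𝓖, G ⊆ Y)
    (hr : #𝓖 ≤ r) (hP : #P + r ≤ #Y) (hmeet : ∀ S ∈ transversals Y r 𝓖, (S ∩ P).Nonempty) :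
    ∃ G ∈ 𝓖, G ⊆ P := by
  by_contra! hcon
  -- One point of each `G` outside `P`: together they extend to a transversal avoiding `P`.
  choose g hgG hgP using fun G : 𝓖 ↦ not_subset.1 (hcon G G.2)
  have hsub : 𝓖.attach.image g ⊆ Y \ P := image_subset_iff.2 fun G _ ↦
    mem_sdiff.2 ⟨h𝓖 G G.2 (hgG G), hgP G⟩
  have hcard : r ≤ #(Y \ P) := by
    have := le_card_sdiff P Y
    omega
  obtain ⟨S, hgS, hSY, hS⟩ :=
    exists_subsuperset_card_eq hsub (card_image_le.trans (by rwa [card_attach])) hcard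
  have hST : S ∈ transversals Y r 𝓖 := mem_filter.2
    ⟨mem_powersetCard.2 ⟨hSY.trans sdiff_subset, hS⟩, fun G hG ↦
        ⟨g ⟨G, hG⟩, mem_inter.2 ⟨hgS (mem_image_of_mem g (mem_attach _ _)), hgG _⟩⟩⟩
  exact (hmeet S hST).ne_empty
    (disjoint_iff_inter_eq_empty.1 (disjoint_of_subset_left hSY sdiff_disjoint))

end SetFamilies

section WeightedSums

variable {a b e N : ℕ} {f g w : ℕ → ℕ}

lemma sum_mul_le_sum_mul_add (hlow : ∀ i < a, f i ≤ g i) (htop : f a ≤ g a + e) (hw : w a = 1) :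
    ∑ i ∈ range (a + 1), f i * w i ≤ ∑ i ∈ range (a + 1), g i * w i + e := by
  have hsum : ∑ i ∈ range a, f i * w i ≤ ∑ i ∈ range a, g i * w i :=
    sum_le_sum fun i hi ↦ Nat.mul_le_mul_right _ (hlow i (mem_range.1 hi))
  rw [sum_range_succ, sum_range_succ, hw]
  omega

lemma le_of_sum_mul_add_le_sum_mul (hlow : ∀ i < a, f i ≤ g i) (htop : f a ≤ g a + e)
    (hw : w a = 1) (h : ∑ i ∈ range (a + 1), g i * w i + e ≤ ∑ i ∈ range (a + 1), f i * w i)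
    (hb : b < a) (hwb : 0 < w b) : g b ≤ f b := by
  by_contra! hlt
  have hsum : ∑ i ∈ range a, f i * w i < ∑ i ∈ range a, g i * w i :=
    sum_lt_sum (fun i hi ↦ Nat.mul_le_mul_right _ (hlow i (mem_range.1 hi)))
      ⟨b, mem_range.2 hb, Nat.mul_lt_mul_of_pos_right hlt hwb⟩
  rw [sum_range_succ, sum_range_succ, hw] at h
  omega

variable {α : Type*} [DecidableEq α] {X Y : Finset α} {𝓖 : Finset (Finset α)}

lemma le_card_transversals_add (h𝓖 : ∀ G ∈ 𝓖, G ⊆ Y) (hYX : Y ⊆ X)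
    (hN : N ≤ ∑ i ∈ range (a + 1), f i * (#X - #Y).choose (a - i))
    (hlow : ∀ i < a, f i ≤ #(transversals Y i 𝓖)) (htop : f a ≤ #(transversals Y a 𝓖) + e) :
    N ≤ #(transversals X a 𝓖) + e := by
  rw [card_transversals_eq_sum h𝓖 hYX]
  exact hN.trans (sum_mul_le_sum_mul_add hlow htop (by rw [Nat.sub_self, Nat.choose_zero_right]))

lemma card_transversals_le_of_card_transversals_add_le (h𝓖 : ∀ G ∈ 𝓖, G ⊆ Y) (hYX : Y ⊆ X)
    (hN : N ≤ ∑ i ∈ range (a + 1), f i * (#X - #Y).choose (a - i))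
    (hlow : ∀ i < a, f i ≤ #(transversals Y i 𝓖)) (htop : f a ≤ #(transversals Y a 𝓖) + e)
    (h : #(transversals X a 𝓖) + e ≤ N) (hb : b < a) (hab : a - b ≤ #X - #Y) :
    #(transversals Y b 𝓖) ≤ f b := by
  rw [card_transversals_eq_sum h𝓖 hYX] at h
  exact le_of_sum_mul_add_le_sum_mul hlow htop (by rw [Nat.sub_self, Nat.choose_zero_right])
    (h.trans hN) hb (Nat.choose_pos hab)

end WeightedSums

section Binomials

variable {a b i t : ℕ}

lemma two_le_choose (ht : 0 < t) (htb : t < b) : 2 ≤ b.choose t := by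
  obtain ⟨s, rfl⟩ := Nat.exists_eq_succ_of_ne_zero ht.ne'
  obtain ⟨c, rfl⟩ := Nat.exists_eq_succ_of_ne_zero (ht.trans htb).ne'
  have hleft : 0 < c.choose s := Nat.choose_pos (by omega)
  have hright : 0 < c.choose (s + 1) := Nat.choose_pos (by omega)
  rw [Nat.succ_eq_add_one, Nat.succ_eq_add_one, Nat.choose_succ_succ']
  omega

lemma choose_succ_le_choose_two_mul_sub (hi : i < a) :
    (a + 1).choose i ≤ (2 * a - i).choose i :=
  Nat.choose_le_choose i (by omega)

lemma choose_add_one_le (hi : 0 < i) (hia : i < a) : a.choose i + 1 ≤ (2 * a - i).choose i := by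
  refine le_trans ?_ (choose_succ_le_choose_two_mul_sub hia)
  obtain ⟨t, rfl⟩ := Nat.exists_eq_succ_of_ne_zero hi.ne'
  have hpos : 0 < a.choose t := Nat.choose_pos (by omega)
  rw [Nat.succ_eq_add_one, Nat.choose_succ_succ']
  omega

lemma choose_add_one_lt (hi : 1 < i) (hia : i < a) : a.choose i + 1 < (2 * a - i).choose i := by
  refine lt_of_lt_of_le ?_ (choose_succ_le_choose_two_mul_sub hia)
  obtain ⟨t, rfl⟩ := Nat.exists_eq_succ_of_ne_zero (zero_lt_one.trans hi).ne'
  have htwo : 2 ≤ a.choose t := two_le_choose (by omega) (by omega)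
  rw [Nat.succ_eq_add_one, Nat.choose_succ_succ']
  omega

lemma choose_add_choose_eq_two_mul_choose_add (b t : ℕ) :
    (b + 2).choose (t + 2) + b.choose (t + 2) = 2 * (b + 1).choose (t + 2) + b.choose t := by
  have h₁ := Nat.choose_succ_succ' (b + 1) (t + 1)
  have h₂ := Nat.choose_succ_succ' b (t + 1)
  have h₃ := Nat.choose_succ_succ' b t
  simp only [Nat.add_assoc, Nat.reduceAdd] at h₁ h₂ h₃
  omega

lemma two_mul_choose_add_one_le (ha : 3 ≤ a) (hi : 0 < i) (hia : i < a) :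
    2 * a.choose i + 1 ≤ (2 * a - i).choose i + (a - 1).choose i := by
  rcases Nat.eq_or_lt_of_le hi with rfl | hi
  · simp only [Nat.choose_one_right]
    omega
  obtain ⟨t, rfl⟩ := Nat.exists_eq_add_of_le' hi
  obtain ⟨b, rfl⟩ := Nat.exists_eq_succ_of_ne_zero (zero_lt_three.trans_le ha).ne'
  have hsucc := choose_succ_le_choose_two_mul_sub hia
  have hdiff := choose_add_choose_eq_two_mul_choose_add b t
  have hpos : 0 < b.choose t := Nat.choose_pos (by omega)
  simp only [zero_add, Nat.reduceAdd, Nat.succ_eq_add_one, Nat.add_assoc, Nat.add_sub_cancel]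
    at hsucc hdiff ⊢
  omega

lemma two_mul_choose_add_one_lt (hi : 2 < i) (hia : i < a) :
    2 * a.choose i + 1 < (2 * a - i).choose i + (a - 1).choose i := by
  obtain ⟨t, rfl⟩ := Nat.exists_eq_add_of_le' hi.le
  obtain ⟨b, rfl⟩ := Nat.exists_eq_succ_of_ne_zero (Nat.ne_zero_of_lt hia)
  have hsucc := choose_succ_le_choose_two_mul_sub hia
  have hdiff := choose_add_choose_eq_two_mul_choose_add b t
  have htwo : 2 ≤ b.choose t := two_le_choose (by omega) (by omega)
  simp only [Nat.succ_eq_add_one, Nat.add_assoc, Nat.reduceAdd, Nat.add_sub_cancel]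
    at hsucc hdiff ⊢
  omega

end Binomials

section Shifted

variable {F U V : Finset (Finset ℕ)} {A B : Finset ℕ} {a m s t : ℕ}

/-- A family is shifted from `t` if replacing an element of one of its members by a smaller one
that is at least `t` yields another member. -/
def IsShiftedFrom (t : ℕ) (F : Finset (Finset ℕ)) : Prop :=
  ∀ A ∈ F, ∀ i j, t ≤ i → i < j → j ∈ A → i ∉ A → insert i (A.erase j) ∈ F

lemma card_insert_erase {i j : ℕ} (hj : j ∈ A) (hi : i ∉ A) : #(insert i (A.erase j)) = #A := by
  rw [card_insert_of_notMem fun h ↦ hi (mem_of_mem_erase h), card_erase_add_one hj]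

lemma exists_mem_Icc_notMem_union {j : ℕ} (hjA : j ∈ A) (hjB : j ∈ B) (hsj : s < j)
    (hs : #A + #B ≤ s) : ∃ i ∈ Icc 1 s, i ∉ A ∪ B := by
  rw [← not_subset]
  intro hsub
  have hj : j ∉ Icc 1 s := fun h ↦ hsj.not_ge (mem_Icc.1 h).2
  have hle := card_le_card (insert_subset (mem_union_left B hjA) hsub)
  have hunion := card_union_add_card_inter A B
  have hinter : 0 < #(A ∩ B) := card_pos.2 ⟨j, mem_inter.2 ⟨hjA, hjB⟩⟩
  rw [card_insert_of_notMem hj, Nat.card_Icc] at hle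
  omega

lemma IsShiftedFrom.inter_inter_Icc_nonempty (hU : IsShiftedFrom 1 U) (hUV : CrossIntersecting U V)
    (hA : A ∈ U) (hB : B ∈ V) (h0 : 0 ∉ A) (hs : #A + #B ≤ s) :
    (A ∩ B ∩ Icc 1 s).Nonempty := by
  induction hN : #(A ∩ B) using Nat.strong_induction_on generalizing A with
  | _ N ih =>
  obtain ⟨j, hj⟩ := hUV A hA B hB
  obtain ⟨hjA, hjB⟩ := mem_inter.1 hj
  rcases le_or_gt j s with hjs | hsj
  · exact ⟨j, mem_inter.2 ⟨hj, mem_Icc.2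
      ⟨Nat.one_le_iff_ne_zero.2 fun h ↦ h0 (h ▸ hjA), hjs⟩⟩⟩
  obtain ⟨i, hi, hiAB⟩ := exists_mem_Icc_notMem_union hjA hjB hsj hs
  rw [notMem_union] at hiAB
  obtain ⟨hi1, his⟩ := mem_Icc.1 hi
  have hinter : insert i (A.erase j) ∩ B = (A ∩ B).erase j := by
    rw [insert_inter_of_notMem hiAB.2, erase_inter]
  have hlt : #(insert i (A.erase j) ∩ B) < N := by
    rw [hinter, ← hN]
    exact card_erase_lt_of_mem hj
  have hnonempty := ih _ hlt (hU A hA i j hi1 (by omega) hjA hiAB.1)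
    (by simp only [mem_insert, mem_erase, not_or, not_and]; exact ⟨by omega, fun _ ↦ h0⟩)
    (by rwa [card_insert_erase hjA hiAB.1]) rfl
  rw [hinter] at hnonempty
  exact hnonempty.mono (inter_subset_inter_right (erase_subset j _))

lemma IsShiftedFrom.mem_of_forall_lt (hF : IsShiftedFrom t F) (hA : A ∈ F) (hcard : #B = #A)
    (ht : ∀ x ∈ B \ A, t ≤ x) (hlt : ∀ x ∈ B \ A, ∀ y ∈ A \ B, x < y) : B ∈ F := by
  induction hN : #(B \ A) generalizing A with
  | zero =>
    rwa [eq_of_subset_of_card_le (sdiff_eq_empty_iff_subset.1 (card_eq_zero.1 hN)) hcard.ge]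
  | succ N ih =>
    obtain ⟨x, hx⟩ := card_pos.1 (by omega : 0 < #(B \ A))
    obtain ⟨y, hy⟩ := card_pos.1 (by rw [← card_sdiff_comm hcard]; omega : 0 < #(A \ B))
    rw [mem_sdiff] at hx hy
    have hxA : x ∉ A := hx.2
    have hB : B \ insert x (A.erase y) = (B \ A).erase x := by
      ext z
      simp only [mem_sdiff, mem_insert, mem_erase, not_or, not_and]
      exact ⟨fun h ↦ ⟨h.2.1, h.1, h.2.2 fun hzy ↦ hy.2 (hzy ▸ h.1)⟩,
        fun h ↦ ⟨h.2.1, h.1, fun _ ↦ h.2.2⟩⟩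
    have hA' : insert x (A.erase y) \ B ⊆ A \ B := by
      rw [insert_sdiff_of_mem _ hx.1]
      exact sdiff_subset_sdiff (erase_subset y A) subset_rfl
    refine ih (hF A hA x y (ht x (mem_sdiff.2 hx)) (hlt x (mem_sdiff.2 hx) y (mem_sdiff.2 hy))
      hy.1 hxA) (by rwa [card_insert_erase hy.1 hxA]) ?_ ?_ ?_
    · exact fun z hz ↦ ht z (mem_of_mem_erase (hB ▸ hz))
    · exact fun z hz w hw ↦ hlt z (mem_of_mem_erase (hB ▸ hz)) w (hA' hw)
    · rw [hB, card_erase_of_mem (mem_sdiff.2 hx), hN, Nat.add_sub_cancel]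

lemma IsShiftedFrom.Ico_mem (hF : IsShiftedFrom t F) (hA : A ∈ F) (ht : ∀ x ∈ A, t ≤ x) :
    Ico t (t + #A) ∈ F := by
  refine hF.mem_of_forall_lt hA (by rw [Nat.card_Ico, Nat.add_sub_cancel_left])
    (fun x hx ↦ (mem_Ico.1 (mem_sdiff.1 hx).1).1) fun x hx y hy ↦ ?_
  have hy' := ht y (mem_sdiff.1 hy).1
  simp only [mem_sdiff, mem_Ico] at hx hy
  omega

lemma IsShiftedFrom.exists_add_mem (hF : IsShiftedFrom t F)
    (hcard : ∀ A ∈ F, #A = a) (ht : ∀ A ∈ F, ∀ x ∈ A, t ≤ x) (h2 : 1 < #F) :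
    ∃ A ∈ F, t + a ∈ A := by
  obtain ⟨A, hA, hne⟩ := exists_mem_ne h2 (Ico t (t + a))
  have hnot : ¬ A ⊆ Ico t (t + a) := fun h ↦
    hne (eq_of_subset_of_card_le h (by rw [Nat.card_Ico, hcard A hA, Nat.add_sub_cancel_left]))
  obtain ⟨y, hyA, hy⟩ := not_subset.1 hnot
  have hty := ht A hA y hyA
  rw [mem_Ico] at hy
  by_cases hmem : t + a ∈ A
  · exact ⟨A, hA, hmem⟩
  · have hne : y ≠ t + a := fun h ↦ hmem (h ▸ hyA)
    exact ⟨_, hF A hA (t + a) y (by omega) (by omega) hyA hmem, mem_insert_self _ _⟩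

lemma IsShiftedFrom.Icc_erase_mem (hF : IsShiftedFrom t F)
    (hcard : ∀ A ∈ F, #A = a) (ht : ∀ A ∈ F, ∀ x ∈ A, t ≤ x) (h2 : 1 < #F) :
    (Icc t (t + a)).erase (t + a - 1) ∈ F := by
  obtain ⟨A, hA, hta⟩ := hF.exists_add_mem hcard ht h2
  have ha := hcard A hA
  have hpos : 0 < a := ha ▸ card_pos.2 ⟨_, hta⟩
  refine hF.mem_of_forall_lt hA ?_ ?_ ?_
  · rw [card_erase_of_mem (mem_Icc.2 (by omega)), Nat.card_Icc]
    omega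
  · exact fun x hx ↦ (mem_Icc.1 (mem_of_mem_erase (mem_sdiff.1 hx).1)).1
  · intro x hx y hy
    have hne : x ≠ t + a := fun h ↦ (mem_sdiff.1 hx).2 (h ▸ hta)
    have hty := ht A hA y (mem_sdiff.1 hy).1
    simp only [mem_sdiff, mem_erase, mem_Icc] at hx hy
    omega

/-- The two smallest `a`-element sets of integers at least `t` in the order in which shifting
decreases sets: `[t, t + a - 1]` and `[t, t + a - 2] ∪ {t + a}`. -/
def initialPair (t a : ℕ) : Finset (Finset ℕ) :=
  {Ico t (t + a), (Icc t (t + a)).erase (t + a - 1)}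

lemma IsShiftedFrom.initialPair_subset (hF : IsShiftedFrom t F)
    (hcard : ∀ A ∈ F, #A = a) (ht : ∀ A ∈ F, ∀ x ∈ A, t ≤ x) (h2 : 1 < #F) :
    initialPair t a ⊆ F := by
  obtain ⟨A, hA⟩ := card_pos.1 (zero_lt_one.trans h2)
  exact insert_subset (hcard A hA ▸ hF.Ico_mem hA (ht A hA))
    (singleton_subset_iff.2 (hF.Icc_erase_mem hcard ht h2))

lemma Ico_mem_powersetCard {X : Finset ℕ} (hX : Ico t (t + a) ⊆ X) :
    Ico t (t + a) ∈ X.powersetCard a :=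
  mem_powersetCard.2 ⟨hX, by rw [Nat.card_Ico, Nat.add_sub_cancel_left]⟩

lemma Ico_union_Icc_erase (t : ℕ) (ha : 0 < a) :
    Ico t (t + a) ∪ (Icc t (t + a)).erase (t + a - 1) = Icc t (t + a) := by
  ext x
  simp only [mem_union, mem_erase, mem_Ico, mem_Icc]
  omega

lemma initialPair_subset_powersetCard {X : Finset ℕ} (ha : 0 < a) (hX : Icc t (t + a) ⊆ X) :
    initialPair t a ⊆ X.powersetCard a := by
  refine insert_subset (Ico_mem_powersetCard (Ico_subset_Icc_self.trans hX))
    (singleton_subset_iff.2 (mem_powersetCard.2 ⟨(erase_subset _ _).trans hX, ?_⟩))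
  rw [card_erase_of_mem (mem_Icc.2 (by omega)), Nat.card_Icc]
  omega

lemma card_transversals_initialPair {X : Finset ℕ} (ha : 0 < a) (hX : Icc t (t + a) ⊆ X) (r : ℕ) :
    #(transversals X r (initialPair t a)) + 2 * (#X - a).choose r =
      (#X).choose r + (#X - (a + 1)).choose r := by
  have hsub := initialPair_subset_powersetCard ha hX
  refine card_transversals_pair_of_card_union (hsub (mem_insert_self _ _))
    (hsub (mem_insert_of_mem (mem_singleton_self _))) ?_ r
  rw [Ico_union_Icc_erase t ha, Nat.card_Icc]
  omega

lemma card_transversals_Ico {X : Finset ℕ} (hX : Ico t (t + a) ⊆ X) (r : ℕ) :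
    #(transversals X r {Ico t (t + a)}) + (#X - a).choose r = (#X).choose r := by
  have hG := card_transversals_singleton hX r
  rwa [Nat.card_Ico, Nat.add_sub_cancel_left] at hG

lemma IsShiftedFrom.nonMemberSubfamily (hF : IsShiftedFrom t F) :
    IsShiftedFrom (t + 1) (F.nonMemberSubfamily t) := by
  intro A hA i j hi hij hj hiA
  rw [mem_nonMemberSubfamily] at hA ⊢
  refine ⟨hF A hA.1 i j (by omega) hij hj hiA, ?_⟩
  rw [mem_insert, mem_erase, not_or, not_and]
  exact ⟨by omega, fun _ ↦ hA.2⟩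

lemma IsShiftedFrom.traceSlice (hU : IsShiftedFrom 1 U) (s i : ℕ) :
    IsShiftedFrom 1 (traceSlice (Icc 1 s) i U) := by
  intro S hS p q hp hpq hq hpS
  obtain ⟨hS, hcard⟩ := mem_slice.1 hS
  obtain ⟨A, hA, rfl⟩ := mem_image.1 hS
  obtain ⟨hqA, hqs⟩ := mem_inter.1 hq
  have hps : p ∈ Icc 1 s := mem_Icc.2 ⟨hp, hpq.le.trans (mem_Icc.1 hqs).2⟩
  have hpA : p ∉ A := fun h ↦ hpS (mem_inter.2 ⟨h, hps⟩)
  refine mem_slice.2 ⟨mem_image.2 ⟨_, hU A hA p q hp hpq hqA hpA, ?_⟩,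
    (card_insert_erase hq hpS).trans hcard⟩
  rw [insert_inter_of_mem hps, erase_inter]

/-- `U` and `V` are shifted cross-intersecting families of `a`-element subsets of `[m]`. A shifted
intersecting family `F` is the case `U = V = F`. -/
structure IsShiftedCrossPair (m a : ℕ) (U V : Finset (Finset ℕ)) : Prop where
  left_subset : U ⊆ (Icc 1 m).powersetCard a
  right_subset : V ⊆ (Icc 1 m).powersetCard a
  left_shifted : IsShiftedFrom 1 U
  right_shifted : IsShiftedFrom 1 V
  cross : CrossIntersecting U V

namespace IsShiftedCrossPair

variable {i : ℕ} {𝓖 : Finset (Finset ℕ)}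

lemma symm (h : IsShiftedCrossPair m a U V) : IsShiftedCrossPair m a V U :=
  ⟨h.right_subset, h.left_subset, h.right_shifted, h.left_shifted, h.cross.symm⟩

lemma one_le_left (h : IsShiftedCrossPair m a U V) : ∀ A ∈ U, ∀ x ∈ A, 1 ≤ x := fun _ hA _ hx ↦
  (mem_Icc.1 ((mem_powersetCard.1 (h.left_subset hA)).1 hx)).1

lemma card_left (h : IsShiftedCrossPair m a U V) : ∀ A ∈ U, #A = a := fun _ hA ↦
  (mem_powersetCard.1 (h.left_subset hA)).2

lemma inter_inter_Icc_nonempty (h : IsShiftedCrossPair m a U V) (hA : A ∈ U) (hB : B ∈ V) :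
    (A ∩ B ∩ Icc 1 (2 * a)).Nonempty :=
  h.left_shifted.inter_inter_Icc_nonempty h.cross hA hB
    (fun h0 ↦ Nat.not_succ_le_zero 0 (h.one_le_left A hA 0 h0))
    (by rw [h.card_left A hA, h.symm.card_left B hB]; omega)

lemma isShiftedCrossPair_traceSlice (h : IsShiftedCrossPair m a U V) (i : ℕ) :
    IsShiftedCrossPair (2 * a) i (traceSlice (Icc 1 (2 * a)) i U)
      (traceSlice (Icc 1 (2 * a)) i V) where
  left_subset := traceSlice_subset _ _ _
  right_subset := traceSlice_subset _ _ _
  left_shifted := h.left_shifted.traceSlice _ _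
  right_shifted := h.right_shifted.traceSlice _ _
  cross := by
    intro S hS R hR
    obtain ⟨A, hA, rfl⟩ := mem_image.1 (mem_slice.1 hS).1
    obtain ⟨B, hB, rfl⟩ := mem_image.1 (mem_slice.1 hR).1
    rw [← inter_inter_distrib_right]
    exact h.inter_inter_Icc_nonempty hA hB

lemma traceSlice_subset_transversals (h : IsShiftedCrossPair m a U V) (h𝓖 : 𝓖 ⊆ V) (i : ℕ) :
    traceSlice (Icc 1 (2 * a)) i U ⊆ transversals (Icc 1 (2 * a)) i 𝓖 := by
  intro S hS
  refine mem_filter.2 ⟨traceSlice_subset _ _ _ hS, fun G hG ↦ ?_⟩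
  obtain ⟨A, hA, rfl⟩ := mem_image.1 (mem_slice.1 hS).1
  rw [inter_right_comm]
  exact h.inter_inter_Icc_nonempty hA (h𝓖 hG)

lemma exists_subset_of_transversals_subset (h : IsShiftedCrossPair m a U V)
    (h𝓖 : ∀ G ∈ 𝓖, G ⊆ Icc 1 (2 * a)) (hcard : #𝓖 < a)
    (hV : transversals (Icc 1 (2 * a)) (a - 1) 𝓖 ⊆ traceSlice (Icc 1 (2 * a)) (a - 1) V)
    (hA : A ∈ U) : ∃ G ∈ 𝓖, G ⊆ A := by
  refine exists_subset_of_forall_transversals_meet h𝓖 (Nat.le_sub_one_of_lt hcard) ?_ ?_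
  · rw [h.card_left A hA, Nat.card_Icc]
    omega
  · intro S hS
    obtain ⟨B, hB, rfl⟩ := mem_image.1 (mem_slice.1 (hV hS)).1
    rw [inter_right_comm, inter_comm B A]
    exact h.inter_inter_Icc_nonempty hA hB

lemma Ico_mem (h : IsShiftedCrossPair m a U V) (hU : U.Nonempty) : Ico 1 (1 + a) ∈ U := by
  obtain ⟨A, hA⟩ := hU
  rw [← h.card_left A hA]
  exact h.left_shifted.Ico_mem hA (h.one_le_left A hA)

end IsShiftedCrossPair

end Shifted

section CrossIntersectingPairs

variable {U V 𝓖 : Finset (Finset ℕ)} {a i m : ℕ}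

namespace IsShiftedCrossPair

lemma card_traceSlice_add_le (h : IsShiftedCrossPair m a U V) (h𝓖U : 𝓖 ⊆ U) (h𝓖V : 𝓖 ⊆ V)
    (hlow : ∀ U' V', IsShiftedCrossPair (2 * a) i U' V' → U'.Nonempty → V'.Nonempty →
      #U' + #V' ≤ #(transversals (Icc 1 (2 * a)) i 𝓖)) :
    #(traceSlice (Icc 1 (2 * a)) i U) + #(traceSlice (Icc 1 (2 * a)) i V) ≤
      #(transversals (Icc 1 (2 * a)) i 𝓖) := by
  rcases (traceSlice (Icc 1 (2 * a)) i U).eq_empty_or_nonempty with hU | hU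
  · rw [hU, card_empty, zero_add]
    exact card_le_card (h.symm.traceSlice_subset_transversals h𝓖U i)
  rcases (traceSlice (Icc 1 (2 * a)) i V).eq_empty_or_nonempty with hV | hV
  · rw [hV, card_empty, add_zero]
    exact card_le_card (h.traceSlice_subset_transversals h𝓖V i)
  exact hlow _ _ (h.isShiftedCrossPair_traceSlice i) hU hV

lemma card_traceSlice_self_add_le (h : IsShiftedCrossPair m a U V)
    (h𝓖 : 𝓖 ⊆ (Icc 1 (2 * a)).powersetCard a) :
    #(traceSlice (Icc 1 (2 * a)) a U) + #(traceSlice (Icc 1 (2 * a)) a V) ≤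
      #(transversals (Icc 1 (2 * a)) a 𝓖) + #𝓖 := by
  have hcard : #(Icc 1 (2 * a)) = 2 * a := by rw [Nat.card_Icc, Nat.add_sub_cancel]
  have htrace := h.isShiftedCrossPair_traceSlice a
  calc #(traceSlice (Icc 1 (2 * a)) a U) + #(traceSlice (Icc 1 (2 * a)) a V)
      ≤ #((Icc 1 (2 * a)).powersetCard a) := by
        rw [card_powersetCard]
        exact htrace.cross.card_add_card_le_choose htrace.left_subset htrace.right_subset hcard
    _ = #(transversals (Icc 1 (2 * a)) a ∅) := by
        simp only [transversals, notMem_empty, false_imp_iff, implies_true, filter_true]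
    _ ≤ #(transversals (Icc 1 (2 * a)) a 𝓖) + #𝓖 := by
        simpa only [empty_union] using card_transversals_le_add_card hcard h𝓖 ∅

lemma card_add_card_le_sum (h : IsShiftedCrossPair m a U V) (hm : 2 * a ≤ m) :
    #U + #V ≤ ∑ i ∈ range (a + 1), (#(traceSlice (Icc 1 (2 * a)) i U) +
      #(traceSlice (Icc 1 (2 * a)) i V)) * (#(Icc 1 m) - #(Icc 1 (2 * a))).choose (a - i) := by
  simp only [add_mul, sum_add_distrib]
  have hYX : Icc 1 (2 * a) ⊆ Icc 1 m := Icc_subset_Icc_right hm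
  exact Nat.add_le_add (card_le_sum_card_traceSlice h.left_subset hYX)
    (card_le_sum_card_traceSlice h.right_subset hYX)

lemma card_add_card_le_card_transversals_add (h : IsShiftedCrossPair m a U V) (hm : 2 * a ≤ m)
    (h𝓖U : 𝓖 ⊆ U) (h𝓖V : 𝓖 ⊆ V) (h𝓖 : 𝓖 ⊆ (Icc 1 (2 * a)).powersetCard a)
    (hlow : ∀ i < a, ∀ U' V', IsShiftedCrossPair (2 * a) i U' V' → U'.Nonempty → V'.Nonempty →
      #U' + #V' ≤ #(transversals (Icc 1 (2 * a)) i 𝓖)) :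
    #U + #V ≤ #(transversals (Icc 1 m) a 𝓖) + #𝓖 :=
  le_card_transversals_add (fun _ hG ↦ (mem_powersetCard.1 (h𝓖 hG)).1) (Icc_subset_Icc_right hm)
    (h.card_add_card_le_sum hm) (fun i hi ↦ h.card_traceSlice_add_le h𝓖U h𝓖V (hlow i hi))
    (h.card_traceSlice_self_add_le h𝓖)

lemma subset_of_transversals_subset (h : IsShiftedCrossPair m a U V)
    (h𝓖 : 𝓖 ⊆ (Icc 1 (2 * a)).powersetCard a) (hcard : #𝓖 < a)
    (hV : transversals (Icc 1 (2 * a)) (a - 1) 𝓖 ⊆ traceSlice (Icc 1 (2 * a)) (a - 1) V) :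
    U ⊆ 𝓖 := by
  intro A hA
  obtain ⟨G, hG, hGA⟩ := h.exists_subset_of_transversals_subset
    (fun _ hG ↦ (mem_powersetCard.1 (h𝓖 hG)).1) hcard hV hA
  rwa [← eq_of_subset_of_card_le hGA
    (by rw [h.card_left A hA, (mem_powersetCard.1 (h𝓖 hG)).2])]

lemma subset_or_subset_of_card_add_card_eq (h : IsShiftedCrossPair m a U V) (hm : 2 * a < m)
    (h𝓖U : 𝓖 ⊆ U) (h𝓖V : 𝓖 ⊆ V) (h𝓖 : 𝓖 ⊆ (Icc 1 (2 * a)).powersetCard a) (hcard : #𝓖 < a)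
    (hlow : ∀ i < a, ∀ U' V', IsShiftedCrossPair (2 * a) i U' V' → U'.Nonempty → V'.Nonempty →
      #U' + #V' ≤ #(transversals (Icc 1 (2 * a)) i 𝓖))
    (hstrict : ∀ U' V', IsShiftedCrossPair (2 * a) (a - 1) U' V' → U'.Nonempty → V'.Nonempty →
      #U' + #V' < #(transversals (Icc 1 (2 * a)) (a - 1) 𝓖))
    (heq : #U + #V = #(transversals (Icc 1 m) a 𝓖) + #𝓖) : U ⊆ 𝓖 ∨ V ⊆ 𝓖 := by
  have hle : #(transversals (Icc 1 (2 * a)) (a - 1) 𝓖) ≤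
      #(traceSlice (Icc 1 (2 * a)) (a - 1) U) +
        #(traceSlice (Icc 1 (2 * a)) (a - 1) V) :=
    card_transversals_le_of_card_transversals_add_le
      (fun _ hG ↦ (mem_powersetCard.1 (h𝓖 hG)).1) (Icc_subset_Icc_right hm.le)
      (h.card_add_card_le_sum hm.le) (fun i hi ↦ h.card_traceSlice_add_le h𝓖U h𝓖V (hlow i hi))
      (h.card_traceSlice_self_add_le h𝓖) heq.ge (by omega)
      (by simp only [Nat.card_Icc]; omega)
  rcases (traceSlice (Icc 1 (2 * a)) (a - 1) U).eq_empty_or_nonempty with hU | hU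
  · rw [hU, card_empty, zero_add] at hle
    exact .inl (h.subset_of_transversals_subset h𝓖 hcard
      (eq_of_subset_of_card_le (h.symm.traceSlice_subset_transversals h𝓖U _) hle).ge)
  rcases (traceSlice (Icc 1 (2 * a)) (a - 1) V).eq_empty_or_nonempty with hV | hV
  · rw [hV, card_empty, add_zero] at hle
    exact .inr (h.symm.subset_of_transversals_subset h𝓖 hcard
      (eq_of_subset_of_card_le (h.traceSlice_subset_transversals h𝓖V _) hle).ge)
  exact absurd hle (hstrict _ _ (h.isShiftedCrossPair_traceSlice _) hU hV).not_ge

end IsShiftedCrossPair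

end CrossIntersectingPairs

section ShiftedPairBounds

variable {U V : Finset (Finset ℕ)} {a i m : ℕ}

lemma card_Icc_one (m : ℕ) : #(Icc 1 m) = m := by rw [Nat.card_Icc, Nat.add_sub_cancel]

lemma Ico_one_subset_Icc {m : ℕ} (ham : a ≤ m) : Ico 1 (1 + a) ⊆ Icc 1 m := fun x hx ↦ by
  rw [mem_Ico] at hx
  exact mem_Icc.2 (by omega)

namespace IsShiftedCrossPair

lemma pos (h : IsShiftedCrossPair m a U V) (hU : U.Nonempty) (hV : V.Nonempty) : 0 < a := by
  obtain ⟨A, hA⟩ := hU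
  obtain ⟨B, hB⟩ := hV
  obtain ⟨x, hx⟩ := h.cross A hA B hB
  rw [← h.card_left A hA]
  exact card_pos.2 ⟨x, (mem_inter.1 hx).1⟩

lemma card_add_card_add_choose_le (h : IsShiftedCrossPair m a U V) (hm : 2 * a ≤ m)
    (hU : U.Nonempty) (hV : V.Nonempty) : #U + #V + (m - a).choose a ≤ m.choose a + 1 := by
  induction a using Nat.strong_induction_on generalizing m U V with
  | _ a ih =>
  have hle := h.card_add_card_le_card_transversals_add hm
    (singleton_subset_iff.2 (h.Ico_mem hU)) (singleton_subset_iff.2 (h.symm.Ico_mem hV))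
    (singleton_subset_iff.2 (Ico_mem_powersetCard (Ico_one_subset_Icc (by omega))))
    fun i hi U' V' h' hU' hV' ↦ by
      have hbound := ih i hi h' (by omega) hU' hV'
      have hG := card_transversals_Ico (Ico_one_subset_Icc (by omega : a ≤ 2 * a)) i
      have hchoose := choose_add_one_le (h'.pos hU' hV') hi
      rw [card_Icc_one, show 2 * a - a = a by omega] at hG
      omega
  have hG := card_transversals_Ico (Ico_one_subset_Icc (by omega : a ≤ m)) a
  rw [card_Icc_one] at hG
  rw [card_singleton] at hle
  omega

lemma card_add_card_le_card_transversals_Ico (h : IsShiftedCrossPair (2 * a) i U V) (hi : i < a)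
    (hU : U.Nonempty) (hV : V.Nonempty) :
    #U + #V ≤ #(transversals (Icc 1 (2 * a)) i {Ico 1 (1 + a)}) := by
  have hbound := h.card_add_card_add_choose_le (by omega) hU hV
  have hG := card_transversals_Ico (Ico_one_subset_Icc (by omega : a ≤ 2 * a)) i
  have hchoose := choose_add_one_le (h.pos hU hV) hi
  rw [card_Icc_one, show 2 * a - a = a by omega] at hG
  omega

lemma card_add_card_lt_card_transversals_Ico (h : IsShiftedCrossPair (2 * a) i U V) (hi : i < a)
    (hi2 : 1 < i) (hU : U.Nonempty) (hV : V.Nonempty) :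
    #U + #V < #(transversals (Icc 1 (2 * a)) i {Ico 1 (1 + a)}) := by
  have hbound := h.card_add_card_add_choose_le (by omega) hU hV
  have hG := card_transversals_Ico (Ico_one_subset_Icc (by omega : a ≤ 2 * a)) i
  have hchoose := choose_add_one_lt hi2 hi
  rw [card_Icc_one, show 2 * a - a = a by omega] at hG
  omega

lemma card_eq_one_or_card_eq_one (h : IsShiftedCrossPair m a U V) (ha : 3 ≤ a) (hm : 2 * a < m)
    (hU : U.Nonempty) (hV : V.Nonempty) (heq : #U + #V + (m - a).choose a = m.choose a + 1) :
    #U = 1 ∨ #V = 1 := by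
  have hG := card_transversals_Ico (Ico_one_subset_Icc (by omega : a ≤ m)) a
  rw [card_Icc_one] at hG
  have hsub := h.subset_or_subset_of_card_add_card_eq hm
    (singleton_subset_iff.2 (h.Ico_mem hU)) (singleton_subset_iff.2 (h.symm.Ico_mem hV))
    (singleton_subset_iff.2 (Ico_mem_powersetCard (Ico_one_subset_Icc (by omega))))
    (by rw [card_singleton]; omega)
    (fun i hi U' V' h' hU' hV' ↦ h'.card_add_card_le_card_transversals_Ico hi hU' hV')
    (fun U' V' h' hU' hV' ↦ h'.card_add_card_lt_card_transversals_Ico (by omega) (by omega)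
      hU' hV')
    (by rw [card_singleton]; omega)
  exact hsub.imp (fun h ↦ (card_le_one_iff_subset_singleton.2 ⟨_, h⟩).antisymm hU.card_pos)
    (fun h ↦ (card_le_one_iff_subset_singleton.2 ⟨_, h⟩).antisymm hV.card_pos)

lemma initialPair_subset (h : IsShiftedCrossPair m a U V) (hU : 1 < #U) :
    initialPair 1 a ⊆ U :=
  h.left_shifted.initialPair_subset h.card_left h.one_le_left hU

lemma card_add_card_le_card_transversals_initialPair (h : IsShiftedCrossPair (2 * a) i U V)
    (ha : 3 ≤ a) (hi : i < a) (hU : U.Nonempty) (hV : V.Nonempty) :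
    #U + #V ≤ #(transversals (Icc 1 (2 * a)) i (initialPair 1 a)) := by
  have hbound := h.card_add_card_add_choose_le (by omega) hU hV
  have hG := card_transversals_initialPair (by omega : 0 < a)
    (Icc_subset_Icc_right (by omega : 1 + a ≤ 2 * a)) i
  have hchoose := two_mul_choose_add_one_le ha (h.pos hU hV) hi
  rw [card_Icc_one, show 2 * a - a = a by omega, show 2 * a - (a + 1) = a - 1 by omega] at hG
  omega

lemma card_add_card_lt_card_transversals_initialPair (h : IsShiftedCrossPair (2 * a) i U V)
    (hi : i < a) (hi2 : 2 < i) (hU : U.Nonempty) (hV : V.Nonempty) :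
    #U + #V < #(transversals (Icc 1 (2 * a)) i (initialPair 1 a)) := by
  have hbound := h.card_add_card_add_choose_le (by omega) hU hV
  have hG := card_transversals_initialPair (by omega : 0 < a)
    (Icc_subset_Icc_right (by omega : 1 + a ≤ 2 * a)) i
  have hchoose := two_mul_choose_add_one_lt hi2 hi
  rw [card_Icc_one, show 2 * a - a = a by omega, show 2 * a - (a + 1) = a - 1 by omega] at hG
  omega

lemma card_add_card_add_two_mul_choose_le (h : IsShiftedCrossPair m a U V) (ha : 3 ≤ a)
    (hm : 2 * a ≤ m) (hU : 1 < #U) (hV : 1 < #V) :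
    #U + #V + 2 * (m - a).choose a ≤ m.choose a + (m - (a + 1)).choose a + 2 := by
  have hle := h.card_add_card_le_card_transversals_add hm (h.initialPair_subset hU)
    (h.symm.initialPair_subset hV)
    (initialPair_subset_powersetCard (by omega) (Icc_subset_Icc_right (by omega)))
    fun i hi U' V' h' hU' hV' ↦ h'.card_add_card_le_card_transversals_initialPair ha hi hU' hV'
  have hG := card_transversals_initialPair (by omega : 0 < a)
    (Icc_subset_Icc_right (by omega : 1 + a ≤ m)) a
  have hcard : #(initialPair 1 a) ≤ 2 := card_le_two
  rw [card_Icc_one] at hG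
  omega

lemma card_eq_two_or_card_eq_two (h : IsShiftedCrossPair m a U V) (ha : 4 ≤ a)
    (hm : 2 * a < m) (hU : 1 < #U) (hV : 1 < #V)
    (heq : #U + #V + 2 * (m - a).choose a = m.choose a + (m - (a + 1)).choose a + 2) :
    #U = 2 ∨ #V = 2 := by
  have hG := card_transversals_initialPair (by omega : 0 < a)
    (Icc_subset_Icc_right (by omega : 1 + a ≤ m)) a
  rw [card_Icc_one] at hG
  have hpair : initialPair 1 a ⊆ (Icc 1 (2 * a)).powersetCard a :=
    initialPair_subset_powersetCard (by omega) (Icc_subset_Icc_right (by omega))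
  have hlow : ∀ i < a, ∀ U' V', IsShiftedCrossPair (2 * a) i U' V' → U'.Nonempty → V'.Nonempty →
      #U' + #V' ≤ #(transversals (Icc 1 (2 * a)) i (initialPair 1 a)) := fun i hi U' V' h' hU' hV' ↦
    h'.card_add_card_le_card_transversals_initialPair (by omega) hi hU' hV'
  have hcard : #(initialPair 1 a) ≤ 2 := card_le_two
  have hle := h.card_add_card_le_card_transversals_add hm.le (h.initialPair_subset hU)
    (h.symm.initialPair_subset hV) hpair hlow
  have hsub := h.subset_or_subset_of_card_add_card_eq hm (h.initialPair_subset hU)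
    (h.symm.initialPair_subset hV) hpair (by omega) hlow
    (fun U' V' h' hU' hV' ↦ h'.card_add_card_lt_card_transversals_initialPair (by omega)
      (by omega) hU' hV') (by omega)
  exact hsub.imp (fun h ↦ ((card_le_card h).trans hcard).antisymm hU)
    (fun h ↦ ((card_le_card h).trans hcard).antisymm hV)

end IsShiftedCrossPair

end ShiftedPairBounds

section ShiftedIntersectingBounds

variable {F 𝓖 : Finset (Finset ℕ)} {i k m r : ℕ}

lemma card_Icc_one_erase_one (hm : 0 < m) : #((Icc 1 m).erase 1) = m - 1 := by
  rw [card_erase_of_mem (mem_Icc.2 ⟨le_rfl, hm⟩), card_Icc_one]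

lemma Icc_two_subset_erase (hkm : k + 2 ≤ m) : Icc 2 (2 + k) ⊆ (Icc 1 m).erase 1 := by
  intro x hx
  rw [mem_Icc] at hx
  exact mem_erase.2 ⟨by omega, mem_Icc.2 (by omega)⟩

lemma Ico_two_subset_erase (hkm : k + 1 ≤ m) : Ico 2 (2 + k) ⊆ (Icc 1 m).erase 1 := by
  intro x hx
  rw [mem_Ico] at hx
  exact mem_erase.2 ⟨by omega, mem_Icc.2 (by omega)⟩

lemma notMem_of_subset_powersetCard_erase (h𝓖 : 𝓖 ⊆ ((Icc 1 m).erase 1).powersetCard k) :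
    ∀ G ∈ 𝓖, 1 ∉ G := fun _ hG h ↦
  notMem_erase 1 _ ((mem_powersetCard.1 (h𝓖 hG)).1 h)

lemma card_transversals_one_Ico (hkm : k + 1 ≤ m) (hr : 0 < r) :
    #(transversals (Icc 1 m) r (insert {1} {Ico 2 (2 + k)})) + (m - k - 1).choose (r - 1) =
      (m - 1).choose (r - 1) := by
  have hG := card_transversals_Ico (Ico_two_subset_erase hkm) (r - 1)
  rw [← card_transversals_insert_singleton (mem_Icc.2 (by omega))
    (notMem_of_subset_powersetCard_erase (singleton_subset_iff.2
      (Ico_mem_powersetCard (Ico_two_subset_erase hkm)))), Nat.sub_add_cancel hr,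
    card_Icc_one_erase_one (by omega)] at hG
  rwa [Nat.sub_right_comm]

lemma card_transversals_one_initialPair (hk : 0 < k) (hkm : k + 2 ≤ m) (hr : 0 < r) :
    #(transversals (Icc 1 m) r (insert {1} (initialPair 2 k))) +
      2 * (m - k - 1).choose (r - 1) = (m - 1).choose (r - 1) + (m - k - 2).choose (r - 1) := by
  have hGH := card_transversals_initialPair hk (Icc_two_subset_erase hkm) (r - 1)
  rw [← card_transversals_insert_singleton (mem_Icc.2 (by omega))
    (notMem_of_subset_powersetCard_erase
      (initialPair_subset_powersetCard hk (Icc_two_subset_erase hkm))), Nat.sub_add_cancel hr,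
    card_Icc_one_erase_one (by omega)] at hGH
  rwa [Nat.sub_right_comm, show m - k - 2 = m - 1 - (k + 1) by omega]

lemma subset_Icc_of_mem_insert_one (hk : 0 < k) (h𝓖 : 𝓖 ⊆ (Icc 1 (2 * k)).powersetCard k) :
    ∀ G ∈ insert {1} 𝓖, G ⊆ Icc 1 (2 * k) :=
  (forall_mem_insert _ _ _).2 ⟨singleton_subset_iff.2 (mem_Icc.2 (by omega)),
    fun _ hG ↦ (mem_powersetCard.1 (h𝓖 hG)).1⟩

namespace IsShiftedCrossPair

lemma traceSlice_self_subset_transversals (h : IsShiftedCrossPair m k F F) (h𝓖 : 𝓖 ⊆ F)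
    (hone : (traceSlice (Icc 1 (2 * k)) i F).nonMemberSubfamily 1 = ∅) :
    traceSlice (Icc 1 (2 * k)) i F ⊆ transversals (Icc 1 (2 * k)) i (insert {1} 𝓖) := by
  intro S hS
  obtain ⟨hSi, hmeet⟩ := mem_filter.1 (h.traceSlice_subset_transversals h𝓖 i hS)
  refine mem_filter.2 ⟨hSi, (forall_mem_insert _ _ _).2 ⟨inter_singleton_nonempty.2 ?_, hmeet⟩⟩
  by_contra h1
  exact notMem_empty S (hone ▸ mem_nonMemberSubfamily.2 ⟨hS, h1⟩)

lemma card_traceSlice_self_le_transversals (h : IsShiftedCrossPair m k F F) (h𝓖 : 𝓖 ⊆ F)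
    (hlow : ∀ A, IsShiftedCrossPair (2 * k) i A A → (A.nonMemberSubfamily 1).Nonempty →
      #A ≤ #(transversals (Icc 1 (2 * k)) i (insert {1} 𝓖))) :
    #(traceSlice (Icc 1 (2 * k)) i F) ≤
      #(transversals (Icc 1 (2 * k)) i (insert {1} 𝓖)) := by
  rcases ((traceSlice (Icc 1 (2 * k)) i F).nonMemberSubfamily 1).eq_empty_or_nonempty
    with hone | hone
  · exact card_le_card (h.traceSlice_self_subset_transversals h𝓖 hone)
  · exact hlow _ (h.isShiftedCrossPair_traceSlice i) hone

lemma card_traceSlice_self_le_transversals_add (h : IsShiftedCrossPair m k F F) (hk : 0 < k)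
    (h𝓖 : 𝓖 ⊆ (Icc 1 (2 * k)).powersetCard k) :
    #(traceSlice (Icc 1 (2 * k)) k F) ≤
      #(transversals (Icc 1 (2 * k)) k (insert {1} 𝓖)) + #𝓖 := by
  have hcard := card_Icc_one (2 * k)
  have htrace := h.isShiftedCrossPair_traceSlice k
  have hhalf := htrace.cross.card_add_card_le_choose htrace.left_subset htrace.right_subset hcard
  have hstar := card_transversals_singleton
    (singleton_subset_iff.2 (mem_Icc.2 (by omega)) : {1} ⊆ Icc 1 (2 * k)) k
  have hpascal := Nat.choose_succ_succ' (2 * k - 1) (k - 1)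
  have hsymm : (2 * k - 1).choose (k - 1) = (2 * k - 1).choose k :=
    Nat.choose_symm_of_eq_add (by omega)
  have hadd := card_transversals_le_add_card hcard h𝓖 {{1}}
  rw [Nat.sub_add_cancel hk, Nat.sub_add_cancel (by omega)] at hpascal
  rw [hcard, card_singleton] at hstar
  rw [hcard] at hhalf
  rw [← insert_eq] at hadd
  omega

lemma card_le_card_transversals_add (h : IsShiftedCrossPair m k F F) (hk : 0 < k)
    (hm : 2 * k ≤ m) (h𝓖F : 𝓖 ⊆ F) (h𝓖 : 𝓖 ⊆ (Icc 1 (2 * k)).powersetCard k)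
    (hlow : ∀ i < k, ∀ A, IsShiftedCrossPair (2 * k) i A A → (A.nonMemberSubfamily 1).Nonempty →
      #A ≤ #(transversals (Icc 1 (2 * k)) i (insert {1} 𝓖))) :
    #F ≤ #(transversals (Icc 1 m) k (insert {1} 𝓖)) + #𝓖 :=
  le_card_transversals_add (subset_Icc_of_mem_insert_one hk h𝓖) (Icc_subset_Icc_right hm)
    (card_le_sum_card_traceSlice h.left_subset (Icc_subset_Icc_right hm))
    (fun i hi ↦ h.card_traceSlice_self_le_transversals h𝓖F (hlow i hi))
    (h.card_traceSlice_self_le_transversals_add hk h𝓖)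

lemma nonMemberSubfamily_subset_of_card_eq (h : IsShiftedCrossPair m k F F)
    (hm : 2 * k < m) (h𝓖F : 𝓖 ⊆ F) (h𝓖 : 𝓖 ⊆ (Icc 1 (2 * k)).powersetCard k)
    (hcard : #𝓖 + 1 < k)
    (hlow : ∀ i < k, ∀ A, IsShiftedCrossPair (2 * k) i A A → (A.nonMemberSubfamily 1).Nonempty →
      #A ≤ #(transversals (Icc 1 (2 * k)) i (insert {1} 𝓖)))
    (hstrict : ∀ A, IsShiftedCrossPair (2 * k) (k - 1) A A → (A.nonMemberSubfamily 1).Nonempty →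
      #A < #(transversals (Icc 1 (2 * k)) (k - 1) (insert {1} 𝓖)))
    (heq : #F = #(transversals (Icc 1 m) k (insert {1} 𝓖)) + #𝓖) :
    F.nonMemberSubfamily 1 ⊆ 𝓖 := by
  have hsub : ∀ G ∈ insert {1} 𝓖, G ⊆ Icc 1 (2 * k) :=
    subset_Icc_of_mem_insert_one (by omega) h𝓖
  have hle : #(transversals (Icc 1 (2 * k)) (k - 1) (insert {1} 𝓖)) ≤
      #(traceSlice (Icc 1 (2 * k)) (k - 1) F) :=
    card_transversals_le_of_card_transversals_add_le hsub (Icc_subset_Icc_right hm.le)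
      (card_le_sum_card_traceSlice h.left_subset (Icc_subset_Icc_right hm.le))
      (fun i hi ↦ h.card_traceSlice_self_le_transversals h𝓖F (hlow i hi))
      (h.card_traceSlice_self_le_transversals_add (by omega) h𝓖) heq.ge (by omega)
      (by simp only [Nat.card_Icc]; omega)
  have hone : (traceSlice (Icc 1 (2 * k)) (k - 1) F).nonMemberSubfamily 1 = ∅ := by
    by_contra hne
    exact absurd hle (hstrict _ (h.isShiftedCrossPair_traceSlice _)
      (nonempty_iff_ne_empty.2 hne)).not_ge
  have htrace := (eq_of_subset_of_card_le
    (h.traceSlice_self_subset_transversals h𝓖F hone) hle).ge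
  intro A hA
  rw [mem_nonMemberSubfamily] at hA
  obtain ⟨G, hG, hGA⟩ := h.exists_subset_of_transversals_subset hsub
    ((card_insert_le _ _).trans_lt hcard) htrace hA.1
  rcases mem_insert.1 hG with rfl | hG
  · exact absurd (singleton_subset_iff.1 hGA) hA.2
  · rwa [← eq_of_subset_of_card_le hGA
      (by rw [h.card_left A hA.1, (mem_powersetCard.1 (h𝓖 hG)).2])]

lemma one_lt_of_nonMemberSubfamily_nonempty (h : IsShiftedCrossPair m k F F)
    (hF : (F.nonMemberSubfamily 1).Nonempty) : 1 < k := by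
  obtain ⟨S, hS⟩ := hF
  obtain ⟨hS, h1⟩ := mem_nonMemberSubfamily.1 hS
  obtain ⟨x, hx⟩ := h.cross S hS S hS
  have hxS := (mem_inter.1 hx).1
  have h1x : 1 < x := (h.one_le_left S hS x hxS).lt_of_ne fun e ↦ h1 (e ▸ hxS)
  obtain ⟨y, hy⟩ := h.cross S hS _ (h.left_shifted S hS 1 x le_rfl h1x hxS h1)
  obtain ⟨hyS, hy⟩ := mem_inter.1 hy
  rw [← h.card_left S hS]
  rcases mem_insert.1 hy with rfl | hy
  · exact absurd hyS h1
  · exact one_lt_card.2 ⟨y, hyS, x, hxS, ne_of_mem_erase hy⟩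

lemma two_le_of_mem_nonMemberSubfamily (h : IsShiftedCrossPair m k F F) :
    ∀ A ∈ F.nonMemberSubfamily 1, ∀ x ∈ A, 2 ≤ x := fun A hA x hx ↦ by
  rw [mem_nonMemberSubfamily] at hA
  exact (h.one_le_left A hA.1 x hx).lt_of_ne fun e ↦ hA.2 (e ▸ hx)

lemma card_of_mem_nonMemberSubfamily (h : IsShiftedCrossPair m k F F) :
    ∀ A ∈ F.nonMemberSubfamily 1, #A = k := fun A hA ↦
  h.card_left A (mem_nonMemberSubfamily.1 hA).1

lemma Ico_two_mem (h : IsShiftedCrossPair m k F F) (hF : (F.nonMemberSubfamily 1).Nonempty) :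
    Ico 2 (2 + k) ∈ F := by
  obtain ⟨A, hA⟩ := hF
  rw [← h.card_of_mem_nonMemberSubfamily A hA]
  exact (mem_nonMemberSubfamily.1 (h.left_shifted.nonMemberSubfamily.Ico_mem hA
    (h.two_le_of_mem_nonMemberSubfamily A hA))).1

lemma initialPair_two_subset (h : IsShiftedCrossPair m k F F)
    (hF : 1 < #(F.nonMemberSubfamily 1)) : initialPair 2 k ⊆ F :=
  (h.left_shifted.nonMemberSubfamily.initialPair_subset h.card_of_mem_nonMemberSubfamily
    h.two_le_of_mem_nonMemberSubfamily hF).trans (filter_subset _ _)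

lemma card_add_choose_le (h : IsShiftedCrossPair m k F F) (hm : 2 * k ≤ m)
    (hF : (F.nonMemberSubfamily 1).Nonempty) :
    #F + (m - k - 1).choose (k - 1) ≤ (m - 1).choose (k - 1) + 1 := by
  induction k using Nat.strong_induction_on generalizing m F with
  | _ k ih =>
  have hk := h.one_lt_of_nonMemberSubfamily_nonempty hF
  have hIco : {Ico 2 (2 + k)} ⊆ (Icc 1 (2 * k)).powersetCard k := singleton_subset_iff.2
    (Ico_mem_powersetCard ((Ico_two_subset_erase (by omega)).trans (erase_subset _ _)))
  have hle := h.card_le_card_transversals_add (by omega) hm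
    (singleton_subset_iff.2 (h.Ico_two_mem hF)) hIco fun i hi A h' hA ↦ by
      have hi1 := h'.one_lt_of_nonMemberSubfamily_nonempty hA
      have hbound := ih i hi h' (by omega) hA
      have hG := card_transversals_one_Ico (by omega : k + 1 ≤ 2 * k) (by omega : 0 < i)
      have hchoose := choose_add_one_le (by omega : 0 < i - 1) (by omega : i - 1 < k - 1)
      rw [show 2 * (k - 1) - (i - 1) = 2 * k - i - 1 by omega] at hchoose
      rw [show 2 * k - k - 1 = k - 1 by omega] at hG
      omega
  have hG := card_transversals_one_Ico (by omega : k + 1 ≤ m) (by omega : 0 < k)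
  rw [card_singleton] at hle
  omega

lemma card_le_card_transversals_initialPair (h : IsShiftedCrossPair (2 * k) i F F) (hk : 4 ≤ k)
    (hi : i < k) (hF : (F.nonMemberSubfamily 1).Nonempty) :
    #F ≤ #(transversals (Icc 1 (2 * k)) i (insert {1} (initialPair 2 k))) := by
  have hi1 := h.one_lt_of_nonMemberSubfamily_nonempty hF
  have hbound := h.card_add_choose_le (by omega) hF
  have hGH := card_transversals_one_initialPair (by omega) (by omega : k + 2 ≤ 2 * k)
    (by omega : 0 < i)
  have hchoose := two_mul_choose_add_one_le (by omega : 3 ≤ k - 1) (by omega : 0 < i - 1)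
    (by omega : i - 1 < k - 1)
  rw [show 2 * (k - 1) - (i - 1) = 2 * k - i - 1 by omega] at hchoose
  rw [show 2 * k - k - 1 = k - 1 by omega, show 2 * k - k - 2 = k - 1 - 1 by omega] at hGH
  omega

lemma card_lt_card_transversals_initialPair (h : IsShiftedCrossPair (2 * k) i F F)
    (hi3 : 3 < i) (hi : i < k) (hF : (F.nonMemberSubfamily 1).Nonempty) :
    #F < #(transversals (Icc 1 (2 * k)) i (insert {1} (initialPair 2 k))) := by
  have hbound := h.card_add_choose_le (by omega) hF
  have hGH := card_transversals_one_initialPair (by omega) (by omega : k + 2 ≤ 2 * k)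
    (by omega : 0 < i)
  have hchoose := two_mul_choose_add_one_lt (by omega : 2 < i - 1) (by omega : i - 1 < k - 1)
  rw [show 2 * (k - 1) - (i - 1) = 2 * k - i - 1 by omega] at hchoose
  rw [show 2 * k - k - 1 = k - 1 by omega, show 2 * k - k - 2 = k - 1 - 1 by omega] at hGH
  omega

lemma initialPair_two_subset_powersetCard (hk : 2 ≤ k) :
    initialPair 2 k ⊆ (Icc 1 (2 * k)).powersetCard k :=
  initialPair_subset_powersetCard (by omega)
    ((Icc_two_subset_erase (by omega)).trans (erase_subset _ _))

lemma card_add_two_mul_choose_le (h : IsShiftedCrossPair m k F F) (hk : 4 ≤ k)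
    (hm : 2 * k ≤ m) (hF : 1 < #(F.nonMemberSubfamily 1)) :
    #F + 2 * (m - k - 1).choose (k - 1) ≤
      (m - 1).choose (k - 1) + (m - k - 2).choose (k - 1) + 2 := by
  have hle := h.card_le_card_transversals_add (by omega) hm (h.initialPair_two_subset hF)
    (initialPair_two_subset_powersetCard (by omega))
    fun i hi A h' hA ↦ h'.card_le_card_transversals_initialPair hk hi hA
  have hGH := card_transversals_one_initialPair (by omega) (by omega : k + 2 ≤ m)
    (by omega : 0 < k)
  have hcard : #(initialPair 2 k) ≤ 2 := card_le_two
  omega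

lemma card_nonMemberSubfamily_le_two (h : IsShiftedCrossPair m k F F) (hk : 5 ≤ k)
    (hm : 2 * k < m) (hF : 1 < #(F.nonMemberSubfamily 1))
    (heq : #F + 2 * (m - k - 1).choose (k - 1) =
      (m - 1).choose (k - 1) + (m - k - 2).choose (k - 1) + 2) :
    #(F.nonMemberSubfamily 1) ≤ 2 := by
  have hcard : #(initialPair 2 k) ≤ 2 := card_le_two
  have hpair := initialPair_two_subset_powersetCard (by omega : 2 ≤ k)
  have hGH := card_transversals_one_initialPair (by omega) (by omega : k + 2 ≤ m)
    (by omega : 0 < k)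
  have hlow : ∀ i < k, ∀ A, IsShiftedCrossPair (2 * k) i A A →
      (A.nonMemberSubfamily 1).Nonempty →
      #A ≤ #(transversals (Icc 1 (2 * k)) i (insert {1} (initialPair 2 k))) := fun i hi A h' hA ↦
    h'.card_le_card_transversals_initialPair (by omega) hi hA
  have hle := h.card_le_card_transversals_add (by omega) hm.le (h.initialPair_two_subset hF)
    hpair hlow
  have hsub := h.nonMemberSubfamily_subset_of_card_eq hm (h.initialPair_two_subset hF) hpair
    (by omega) hlow (fun A h' hA ↦ h'.card_lt_card_transversals_initialPair (by omega)
      (by omega) hA) (by omega)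
  exact (card_le_card hsub).trans hcard

end IsShiftedCrossPair

end ShiftedIntersectingBounds

section Compression

variable {α M : Type*} [DecidableEq α] [AddCommMonoid M] {F U V : Finset (Finset α)}
  {A X : Finset α} {i j : α} {k : ℕ}

lemma sum_compression (u v : Finset α) (F : Finset (Finset α)) (f : Finset α → M) :
    ∑ A ∈ 𝓒 u v F, f A =
      ∑ A ∈ F, if UV.compress u v A ∈ F then f A else f (UV.compress u v A) := by
  rw [UV.compression, sum_union UV.compress_disjoint, filter_image, sum_image UV.compress_injOn,
    sum_ite]

lemma card_filter_le_card_filter_compression {u v : Finset α} {p : Finset α → Prop}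
    [DecidablePred p] (hp : ∀ A ∈ F, p A → p (UV.compress u v A)) :
    #(F.filter p) ≤ #((𝓒 u v F).filter p) := by
  rw [card_filter, card_filter, sum_compression]
  refine sum_le_sum fun A hA ↦ ?_
  have := hp A hA
  split_ifs <;> grind

lemma compress_singleton (hij : i ≠ j) (A : Finset α) :
    UV.compress {i} {j} A = if i ∉ A ∧ j ∈ A then insert i (A.erase j) else A := by
  simp only [UV.compress, disjoint_singleton_left, singleton_subset_iff, sup_eq_union,
    union_singleton, sdiff_singleton_eq_erase, erase_insert_of_ne hij]

lemma mem_compression_singleton (hij : i ≠ j) :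
    A ∈ 𝓒 {i} {j} F ↔ (A ∈ F ∧ (i ∉ A → j ∈ A → insert i (A.erase j) ∈ F)) ∨
      (A ∉ F ∧ ∃ B ∈ F, i ∉ B ∧ j ∈ B ∧ insert i (B.erase j) = A) := by
  rw [UV.mem_compression]
  simp only [compress_singleton hij]
  grind

lemma compression_subset_powersetCard (hi : i ∈ X) (hF : F ⊆ X.powersetCard k) (j : α) :
    𝓒 {i} {j} F ⊆ X.powersetCard k := by
  rcases eq_or_ne i j with rfl | hij
  · rwa [UV.compression_self]
  intro A hA
  rcases (mem_compression_singleton hij).1 hA with ⟨hA, -⟩ | ⟨-, B, hB, hiB, hjB, rfl⟩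
  · exact hF hA
  · obtain ⟨hBX, hB⟩ := mem_powersetCard.1 (hF hB)
    refine mem_powersetCard.2 ⟨insert_subset hi ((erase_subset _ _).trans hBX), ?_⟩
    rw [card_insert_of_notMem fun h ↦ hiB (mem_of_mem_erase h), card_erase_add_one hjB, hB]

lemma CrossIntersecting.compression (h : CrossIntersecting U V) (i j : α) :
    CrossIntersecting (𝓒 {i} {j} U) (𝓒 {i} {j} V) := by
  rcases eq_or_ne i j with rfl | hij
  · rwa [UV.compression_self, UV.compression_self]
  have hmoved : ∀ {U V : Finset (Finset α)}, CrossIntersecting U V → ∀ A ∈ U, i ∉ A →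
      ∀ B ∈ V, (i ∉ B → j ∈ B → insert i (B.erase j) ∈ V) →
      (insert i (A.erase j) ∩ B).Nonempty := by
    intro U V h A hA hiA B hB hmove
    by_cases hiB : i ∈ B
    · exact ⟨i, mem_inter.2 ⟨mem_insert_self _ _, hiB⟩⟩
    by_cases hjB : j ∈ B
    · obtain ⟨x, hx⟩ := h A hA _ (hmove hiB hjB)
      exact ⟨x, by grind⟩
    · obtain ⟨x, hx⟩ := h A hA B hB
      exact ⟨x, by grind⟩
  intro A' hA B' hB
  rw [mem_compression_singleton hij] at hA hB
  rcases hA with ⟨hA, hA'⟩ | ⟨-, A, hA, hiA, -, rfl⟩ <;>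
    rcases hB with ⟨hB, hB'⟩ | ⟨-, B, hB, hiB, -, rfl⟩
  · exact h A' hA B' hB
  · rw [inter_comm]
    exact hmoved h.symm B hB hiB A' hA hA'
  · exact hmoved h A hA hiA B' hB hB'
  · exact ⟨i, mem_inter.2 ⟨mem_insert_self _ _, mem_insert_self _ _⟩⟩

lemma card_nonMemberSubfamily_le_compression {c : α} (hci : c ≠ i) (j : α)
    (F : Finset (Finset α)) :
    #(F.nonMemberSubfamily c) ≤ #((𝓒 {i} {j} F).nonMemberSubfamily c) := by
  rcases eq_or_ne i j with rfl | hij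
  · rw [UV.compression_self]
  refine card_filter_le_card_filter_compression fun A _ hcA ↦ ?_
  rw [compress_singleton hij]
  grind

lemma card_nonMemberSubfamily_nonMemberSubfamily_le_compression (hij : i ≠ j)
    (F : Finset (Finset α)) :
    #((F.nonMemberSubfamily i).nonMemberSubfamily j) ≤ #((𝓒 {i} {j} F).nonMemberSubfamily i) := by
  have hle : #{A ∈ F | i ∉ A ∧ j ∉ A} ≤ #{A ∈ 𝓒 {i} {j} F | i ∉ A ∧ j ∉ A} :=
    card_filter_le_card_filter_compression fun A _ hA ↦ by
      rwa [compress_singleton hij, if_neg fun h ↦ hA.2 h.2]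
  rw [nonMemberSubfamily, nonMemberSubfamily, filter_filter]
  exact hle.trans (card_le_card (monotone_filter_right _ fun _ _ h ↦ h.1))

end Compression

section Shifting

variable {F U V : Finset (Finset ℕ)} {A : Finset ℕ} {i j a m : ℕ}

/-- The sum of all elements of all members of `F`; it strictly decreases under every shift that
changes `F`. -/
def weight (F : Finset (Finset ℕ)) : ℕ := ∑ A ∈ F, ∑ x ∈ A, x

lemma sum_insert_erase_lt (hij : i < j) (hi : i ∉ A) (hj : j ∈ A) :
    ∑ x ∈ insert i (A.erase j), x < ∑ x ∈ A, x := by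
  rw [sum_insert fun h ↦ hi (mem_of_mem_erase h), ← add_sum_erase A _ hj]
  omega

lemma sum_compress_le (hij : i < j) (A : Finset ℕ) :
    ∑ x ∈ UV.compress {i} {j} A, x ≤ ∑ x ∈ A, x := by
  rw [compress_singleton hij.ne]
  split_ifs with h
  · exact (sum_insert_erase_lt hij h.1 h.2).le
  · exact le_rfl

lemma weight_compression_le (hij : i < j) (F : Finset (Finset ℕ)) :
    weight (𝓒 {i} {j} F) ≤ weight F := by
  rw [weight, sum_compression]
  refine sum_le_sum fun A _ ↦ ?_
  split_ifs
  · exact le_rfl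
  · exact sum_compress_le hij A

lemma weight_compression_lt (hij : i < j) (hA : A ∈ F) (hi : i ∉ A) (hj : j ∈ A)
    (hnot : insert i (A.erase j) ∉ F) : weight (𝓒 {i} {j} F) < weight F := by
  rw [weight, sum_compression]
  refine sum_lt_sum (fun B _ ↦ ?_) ⟨A, hA, ?_⟩
  · split_ifs
    · exact le_rfl
    · exact sum_compress_le hij B
  · have hcompress : UV.compress {i} {j} A = insert i (A.erase j) := by
      rw [compress_singleton hij.ne, if_pos ⟨hi, hj⟩]
    rw [hcompress, if_neg hnot]
    exact sum_insert_erase_lt hij hi hj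

lemma exists_weight_compression_lt (hF : F ⊆ (Icc 1 m).powersetCard a)
    (hshift : ¬ IsShiftedFrom 1 F) :
    ∃ i ∈ Icc 1 m, ∃ j ∈ Icc 1 m, i < j ∧ weight (𝓒 {i} {j} F) < weight F := by
  simp only [IsShiftedFrom] at hshift
  push Not at hshift
  obtain ⟨A, hA, i, j, hi, hij, hjA, hiA, hnot⟩ := hshift
  have hj := (mem_powersetCard.1 (hF hA)).1 hjA
  exact ⟨i, mem_Icc.2 ⟨hi, hij.le.trans (mem_Icc.1 hj).2⟩, j, hj, hij,
    weight_compression_lt hij hA hiA hjA hnot⟩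

lemma exists_isShiftedCrossPair_of_subset_Icc (hU : U ⊆ (Icc 1 m).powersetCard a)
    (hV : V ⊆ (Icc 1 m).powersetCard a) (h : CrossIntersecting U V) :
    ∃ U' V', IsShiftedCrossPair m a U' V' ∧ #U' = #U ∧ #V' = #V := by
  induction hN : weight U + weight V using Nat.strong_induction_on generalizing U V with
  | _ N ih =>
  have hcompress : ∀ i ∈ Icc 1 m, ∀ j, weight (𝓒 {i} {j} U) + weight (𝓒 {i} {j} V) < N →
      ∃ U' V', IsShiftedCrossPair m a U' V' ∧ #U' = #U ∧ #V' = #V := by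
    intro i hi j hlt
    simpa only [UV.card_compression] using ih _ hlt (compression_subset_powersetCard hi hU j)
      (compression_subset_powersetCard hi hV j) (h.compression i j) rfl
  by_cases hUs : IsShiftedFrom 1 U
  · by_cases hVs : IsShiftedFrom 1 V
    · exact ⟨U, V, ⟨hU, hV, hUs, hVs, h⟩, rfl, rfl⟩
    · obtain ⟨i, hi, j, -, hij, hlt⟩ := exists_weight_compression_lt hV hVs
      have := weight_compression_le hij U
      exact hcompress i hi j (by omega)
  · obtain ⟨i, hi, j, -, hij, hlt⟩ := exists_weight_compression_lt hU hUs
    have := weight_compression_le hij V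
    exact hcompress i hi j (by omega)

end Shifting

section Relabelling

variable {α β : Type*} [DecidableEq β] {f : α → β} {U : Finset (Finset α)} {X : Finset α} {a : ℕ}

lemma image_image_subset_powersetCard {Y : Finset β} (hf : Set.InjOn f X)
    (hfY : ∀ x ∈ X, f x ∈ Y) (hU : U ⊆ X.powersetCard a) :
    U.image (·.image f) ⊆ Y.powersetCard a := image_subset_iff.2 fun A hA ↦ by
  obtain ⟨hAX, hA⟩ := mem_powersetCard.1 (hU hA)
  exact mem_powersetCard.2 ⟨image_subset_iff.2 fun x hx ↦ hfY x (hAX hx),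
    (card_image_of_injOn (hf.mono hAX)).trans hA⟩

lemma card_image_image (hf : Set.InjOn f X) (hU : U ⊆ X.powersetCard a) :
    #(U.image (·.image f)) = #U :=
  card_image_of_injOn ((image_injOn_powerset_of_injOn hf).mono fun _ hA ↦
    mem_powerset.2 (mem_powersetCard.1 (hU hA)).1)

end Relabelling

section CrossIntersectingBounds

variable {α : Type*} [DecidableEq α] {U V : Finset (Finset α)} {X : Finset α} {a : ℕ}

lemma CrossIntersecting.image {β : Type*} [DecidableEq β] (h : CrossIntersecting U V)
    (f : α → β) : CrossIntersecting (U.image (·.image f)) (V.image (·.image f)) := by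
  simp only [CrossIntersecting, forall_mem_image]
  exact fun A hA B hB ↦ ((h A hA B hB).image f).mono (image_inter_subset f A B)

lemma exists_isShiftedCrossPair (h : CrossIntersecting U V) (hU : U ⊆ X.powersetCard a)
    (hV : V ⊆ X.powersetCard a) :
    ∃ U' V', IsShiftedCrossPair #X a U' V' ∧ #U' = #U ∧ #V' = #V := by
  obtain ⟨f, hfX, hf⟩ : ∃ f : α → ℕ, (X : Set α) ⊆ f ⁻¹' (Icc 1 #X : Finset ℕ) ∧ Set.InjOn f X :=
    X.finite_toSet.exists_injOn_of_encard_le (by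
      rw [Set.encard_coe_eq_coe_finsetCard, Set.encard_coe_eq_coe_finsetCard, card_Icc_one])
  rw [← card_image_image hf hU, ← card_image_image hf hV]
  exact exists_isShiftedCrossPair_of_subset_Icc (image_image_subset_powersetCard hf hfX hU)
    (image_image_subset_powersetCard hf hfX hV) (h.image f)

namespace CrossIntersecting

lemma card_add_card_add_choose_le (h : CrossIntersecting U V) (hU : U ⊆ X.powersetCard a)
    (hV : V ⊆ X.powersetCard a) (hX : 2 * a ≤ #X) (hU' : U.Nonempty) (hV' : V.Nonempty) :
    #U + #V + (#X - a).choose a ≤ (#X).choose a + 1 := by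
  obtain ⟨S, T, hS, hSU, hTV⟩ := exists_isShiftedCrossPair h hU hV
  rw [← card_pos] at hU' hV'
  rw [← hSU, ← hTV]
  exact hS.card_add_card_add_choose_le hX (card_pos.1 (by omega)) (card_pos.1 (by omega))

lemma card_add_card_add_choose_lt (h : CrossIntersecting U V) (hU : U ⊆ X.powersetCard a)
    (hV : V ⊆ X.powersetCard a) (ha : 3 ≤ a) (hX : 2 * a < #X) (hU' : 1 < #U) (hV' : 1 < #V) :
    #U + #V + (#X - a).choose a < (#X).choose a + 1 := by
  obtain ⟨S, T, hS, hSU, hTV⟩ := exists_isShiftedCrossPair h hU hV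
  rw [← hSU] at hU' ⊢
  rw [← hTV] at hV' ⊢
  have hS' : S.Nonempty := card_pos.1 (by omega)
  have hT' : T.Nonempty := card_pos.1 (by omega)
  refine (hS.card_add_card_add_choose_le hX.le hS' hT').lt_of_ne fun heq ↦ ?_
  have := hS.card_eq_one_or_card_eq_one ha hX hS' hT' heq
  omega

lemma card_add_card_add_two_mul_choose_le (h : CrossIntersecting U V)
    (hU : U ⊆ X.powersetCard a) (hV : V ⊆ X.powersetCard a) (ha : 3 ≤ a) (hX : 2 * a ≤ #X)
    (hU' : 1 < #U) (hV' : 1 < #V) :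
    #U + #V + 2 * (#X - a).choose a ≤ (#X).choose a + (#X - (a + 1)).choose a + 2 := by
  obtain ⟨S, T, hS, hSU, hTV⟩ := exists_isShiftedCrossPair h hU hV
  rw [← hSU] at hU' ⊢
  rw [← hTV] at hV' ⊢
  exact hS.card_add_card_add_two_mul_choose_le ha hX hU' hV'

lemma card_add_card_add_two_mul_choose_lt (h : CrossIntersecting U V)
    (hU : U ⊆ X.powersetCard a) (hV : V ⊆ X.powersetCard a) (ha : 4 ≤ a) (hX : 2 * a < #X)
    (hU' : 2 < #U) (hV' : 2 < #V) :
    #U + #V + 2 * (#X - a).choose a < (#X).choose a + (#X - (a + 1)).choose a + 2 := by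
  obtain ⟨S, T, hS, hSU, hTV⟩ := exists_isShiftedCrossPair h hU hV
  rw [← hSU] at hU' ⊢
  rw [← hTV] at hV' ⊢
  refine (hS.card_add_card_add_two_mul_choose_le (by omega) hX.le (by omega)
    (by omega)).lt_of_ne fun heq ↦ ?_
  have := hS.card_eq_two_or_card_eq_two ha hX (by omega) (by omega) heq
  omega

end CrossIntersecting

end CrossIntersectingBounds

section Splitting

variable {α : Type*} [DecidableEq α] {F U V W P : Finset (Finset α)} {X Y : Finset α} {c x y : α}
  {t k : ℕ}

lemma choose_sub_eq_add {b N : ℕ} (h : b < N) (t : ℕ) :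
    (N - b).choose (t + 1) = (N - (b + 1)).choose t + (N - (b + 1)).choose (t + 1) := by
  rw [← Nat.choose_succ_succ', show N - (b + 1) + 1 = N - b by omega]

lemma card_lt_card_union {A B : Finset α} (h : #A = #B) (hne : A ≠ B) : #A < #(A ∪ B) :=
  card_lt_card ⟨subset_union_left, fun hsub ↦
    hne (eq_of_subset_of_card_le (subset_union_right.trans hsub) h.le).symm⟩

/-- The situation obtained from an intersecting `(t + 2)`-uniform family and two elements `x`, `y`:
the members containing both, only `x`, only `y` and neither of them, with `x` and `y` deleted,
form `W`, `U`, `V` and `P`. -/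
structure IsCrossQuadruple (Y : Finset α) (t : ℕ) (W U V P : Finset (Finset α)) : Prop where
  both_subset : W ⊆ Y.powersetCard t
  left_subset : U ⊆ Y.powersetCard (t + 1)
  right_subset : V ⊆ Y.powersetCard (t + 1)
  neither_subset : P ⊆ Y.powersetCard (t + 2)
  cross_left_right : CrossIntersecting U V
  cross_both_neither : CrossIntersecting W P

namespace IsCrossQuadruple

lemma card_both_le_transversals (h : IsCrossQuadruple Y t W U V P) : #W ≤ #(transversals Y t P) :=
  card_le_card (h.cross_both_neither.subset_transversals h.both_subset subset_rfl)

-- The slack `e` is `0` for the bound itself and `1` for its strict form.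
lemma card_add_le_of_neither_eq_empty {e : ℕ} (h : IsCrossQuadruple Y t W U V ∅)
    (hUV : #U + #V + 2 * (#Y - (t + 1)).choose (t + 1) + e ≤
      (#Y).choose (t + 1) + (#Y - (t + 2)).choose (t + 1) + 2) :
    #W + #U + #V + 2 * (#Y - (t + 1)).choose (t + 1) + e ≤
      (#Y + 1).choose (t + 1) + (#Y - (t + 2)).choose (t + 1) + 2 := by
  have hW := (card_le_card h.both_subset).trans_eq (card_powersetCard t Y)
  have hsucc := Nat.choose_succ_succ' #Y t
  omega

lemma card_add_le_of_neither_eq_singleton {e : ℕ} {A : Finset α}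
    (h : IsCrossQuadruple Y t W U V {A}) (hY : t + 1 < #Y)
    (hUV : #U + #V + (#Y - (t + 1)).choose (t + 1) + e ≤ (#Y).choose (t + 1) + 1) :
    #W + #U + #V + 1 + 2 * (#Y - (t + 1)).choose (t + 1) + e ≤
      (#Y + 1).choose (t + 1) + (#Y - (t + 2)).choose (t + 1) + 2 := by
  obtain ⟨hAY, hA⟩ := mem_powersetCard.1 (h.neither_subset (mem_singleton_self A))
  have hW := h.card_both_le_transversals
  have hT := card_transversals_singleton hAY t
  have hsucc := Nat.choose_succ_succ' #Y t
  have hsub := choose_sub_eq_add hY t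
  simp only [Nat.add_assoc, Nat.reduceAdd, hA] at hsub hT
  omega

lemma card_add_lt_of_neither_eq_pair {A B : Finset α} (h : IsCrossQuadruple Y t W U V {A, B})
    (hAB : A ≠ B) (ht : 2 ≤ t) (hY : 2 * (t + 1) < #Y)
    (hUV : #U + #V + (#Y - (t + 1)).choose (t + 1) ≤ (#Y).choose (t + 1) + 1) :
    #W + #U + #V + 2 + 2 * (#Y - (t + 1)).choose (t + 1) <
      (#Y + 1).choose (t + 1) + (#Y - (t + 2)).choose (t + 1) + 2 := by
  obtain ⟨s, rfl⟩ := Nat.exists_eq_succ_of_ne_zero (by omega : t ≠ 0)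
  rw [Nat.succ_eq_add_one] at *
  obtain ⟨hAY, hA⟩ := mem_powersetCard.1 (h.neither_subset (mem_insert_self A {B}))
  obtain ⟨hBY, hB⟩ := mem_powersetCard.1
    (h.neither_subset (mem_insert_of_mem (mem_singleton_self B)))
  have hunion := card_lt_card_union (hA.trans hB.symm) hAB
  have hW := h.card_both_le_transversals
  have hT := card_transversals_pair hAY hBY (s + 1)
  have hsucc := Nat.choose_succ_succ' #Y (s + 1)
  have hsub := choose_sub_eq_add (by omega : s + 2 < #Y) (s + 1)
  have hsub' := choose_sub_eq_add (by omega : s + 3 < #Y) s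
  have hmono : (#Y - #(A ∪ B)).choose (s + 1) ≤ (#Y - (s + 4)).choose (s + 1) :=
    Nat.choose_le_choose _ (by omega)
  have htwo : 2 ≤ (#Y - (s + 4)).choose s := two_le_choose (by omega) (by omega)
  simp only [Nat.add_assoc, Nat.reduceAdd, hA, hB] at hsub hsub' hT hsucc hUV hmono ⊢
  omega

lemma card_add_le (h : IsCrossQuadruple Y t W U V P) (ht : 2 ≤ t) (hY : 2 * (t + 1) < #Y)
    (hP : #P ≤ 2) (hUP : 2 < #U + #P) (hVP : 2 < #V + #P) :
    #W + #U + #V + #P + 2 * (#Y - (t + 1)).choose (t + 1) ≤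
      (#Y + 1).choose (t + 1) + (#Y - (t + 2)).choose (t + 1) + 2 := by
  have hUV := h.cross_left_right.card_add_card_add_choose_le h.left_subset h.right_subset hY.le
    (card_pos.1 (by omega)) (card_pos.1 (by omega))
  obtain hP | hP | hP : #P = 0 ∨ #P = 1 ∨ #P = 2 := by omega
  · obtain rfl := card_eq_zero.1 hP
    exact h.card_add_le_of_neither_eq_empty (e := 0)
      (h.cross_left_right.card_add_card_add_two_mul_choose_le h.left_subset h.right_subset
        (by omega) hY.le (by omega) (by omega))
  · obtain ⟨A, rfl⟩ := card_eq_one.1 hP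
    exact h.card_add_le_of_neither_eq_singleton (e := 0) (by omega) hUV
  · obtain ⟨A, B, hAB, rfl⟩ := card_eq_two.1 hP
    rw [hP]
    exact (h.card_add_lt_of_neither_eq_pair hAB ht hY hUV).le

lemma card_add_lt (h : IsCrossQuadruple Y t W U V P) (ht : 3 ≤ t) (hY : 2 * (t + 1) < #Y)
    (hP : #P ≤ 2) (hUP : 2 < #U + #P) (hVP : 2 < #V + #P) :
    #W + #U + #V + #P + 2 * (#Y - (t + 1)).choose (t + 1) <
      (#Y + 1).choose (t + 1) + (#Y - (t + 2)).choose (t + 1) + 2 := by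
  obtain hP | hP | hP : #P = 0 ∨ #P = 1 ∨ #P = 2 := by omega
  · obtain rfl := card_eq_zero.1 hP
    exact h.card_add_le_of_neither_eq_empty (e := 1)
      (h.cross_left_right.card_add_card_add_two_mul_choose_lt h.left_subset h.right_subset
        (by omega) hY (by omega) (by omega))
  · obtain ⟨A, rfl⟩ := card_eq_one.1 hP
    exact h.card_add_le_of_neither_eq_singleton (e := 1) (by omega)
      (h.cross_left_right.card_add_card_add_choose_lt h.left_subset h.right_subset (by omega) hY
        (by omega) (by omega))
  · obtain ⟨A, B, hAB, rfl⟩ := card_eq_two.1 hP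
    rw [hP]
    exact h.card_add_lt_of_neither_eq_pair hAB (by omega) hY
      (h.cross_left_right.card_add_card_add_choose_le h.left_subset h.right_subset hY.le
        (card_pos.1 (by omega)) (card_pos.1 (by omega)))

end IsCrossQuadruple

lemma memberSubfamily_subset_powersetCard {r : ℕ} (hU : U ⊆ X.powersetCard (r + 1)) (c : α) :
    U.memberSubfamily c ⊆ (X.erase c).powersetCard r := by
  intro A hA
  rw [mem_memberSubfamily] at hA
  obtain ⟨hAX, hcard⟩ := mem_powersetCard.1 (hU hA.1)
  rw [card_insert_of_notMem hA.2, Nat.add_right_cancel_iff] at hcard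
  exact mem_powersetCard.2 ⟨subset_erase.2 ⟨(subset_insert c A).trans hAX, hA.2⟩, hcard⟩

lemma nonMemberSubfamily_subset_powersetCard {r : ℕ} (hU : U ⊆ X.powersetCard r) (c : α) :
    U.nonMemberSubfamily c ⊆ (X.erase c).powersetCard r := by
  intro A hA
  rw [mem_nonMemberSubfamily] at hA
  obtain ⟨hAX, hcard⟩ := mem_powersetCard.1 (hU hA.1)
  exact mem_powersetCard.2 ⟨subset_erase.2 ⟨hAX, hA.2⟩, hcard⟩

namespace CrossIntersecting

lemma nonMemberSubfamily_memberSubfamily (h : CrossIntersecting U V) (c : α) :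
    CrossIntersecting (U.nonMemberSubfamily c) (V.memberSubfamily c) := by
  intro A hA B hB
  rw [mem_nonMemberSubfamily] at hA
  rw [← inter_insert_of_notMem hA.2]
  exact h A hA.1 _ (mem_memberSubfamily.1 hB).1

lemma memberSubfamily_nonMemberSubfamily (h : CrossIntersecting U V) (c : α) :
    CrossIntersecting (U.memberSubfamily c) (V.nonMemberSubfamily c) :=
  (h.symm.nonMemberSubfamily_memberSubfamily c).symm

lemma isCrossQuadruple (h : CrossIntersecting F F) (hF : F ⊆ X.powersetCard (t + 2)) (x y : α) :
    IsCrossQuadruple ((X.erase y).erase x) t ((F.memberSubfamily y).memberSubfamily x)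
      ((F.nonMemberSubfamily y).memberSubfamily x) ((F.memberSubfamily y).nonMemberSubfamily x)
      ((F.nonMemberSubfamily y).nonMemberSubfamily x) where
  both_subset := memberSubfamily_subset_powersetCard (memberSubfamily_subset_powersetCard hF y) x
  left_subset := memberSubfamily_subset_powersetCard (nonMemberSubfamily_subset_powersetCard hF y) x
  right_subset :=
    nonMemberSubfamily_subset_powersetCard (memberSubfamily_subset_powersetCard hF y) x
  neither_subset :=
    nonMemberSubfamily_subset_powersetCard (nonMemberSubfamily_subset_powersetCard hF y) x
  cross_left_right :=
    (h.nonMemberSubfamily_memberSubfamily y).memberSubfamily_nonMemberSubfamily x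
  cross_both_neither :=
    (h.memberSubfamily_nonMemberSubfamily y).memberSubfamily_nonMemberSubfamily x

end CrossIntersecting

lemma card_nonMemberSubfamily_eq_add (hxy : x ≠ y) (F : Finset (Finset α)) :
    #(F.nonMemberSubfamily x) = #((F.memberSubfamily y).nonMemberSubfamily x) +
      #((F.nonMemberSubfamily y).nonMemberSubfamily x) := by
  have hcomm : (F.memberSubfamily y).nonMemberSubfamily x =
      (F.nonMemberSubfamily x).memberSubfamily y := by
    ext A
    simp only [mem_nonMemberSubfamily, mem_memberSubfamily, mem_insert, hxy, false_or]
    tauto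
  have hcomm' : (F.nonMemberSubfamily y).nonMemberSubfamily x =
      (F.nonMemberSubfamily x).nonMemberSubfamily y := filter_comm _ _ _
  rw [hcomm, hcomm', card_memberSubfamily_add_card_nonMemberSubfamily]

lemma exists_isCrossQuadruple (hF : F ⊆ X.powersetCard (t + 2)) (h : CrossIntersecting F F)
    (hx : x ∈ X) (hy : y ∈ X) (hxy : x ≠ y) :
    ∃ Y W U V P, IsCrossQuadruple Y t W U V P ∧ #Y + 2 = #X ∧ #W + #U + #V + #P = #F ∧
      P = (F.nonMemberSubfamily y).nonMemberSubfamily x ∧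
      #U + #P = #(F.nonMemberSubfamily y) ∧ #V + #P = #(F.nonMemberSubfamily x) := by
  have hmember := card_memberSubfamily_add_card_nonMemberSubfamily y F
  have hmember' := card_memberSubfamily_add_card_nonMemberSubfamily x (F.memberSubfamily y)
  have hnonMember := card_memberSubfamily_add_card_nonMemberSubfamily x (F.nonMemberSubfamily y)
  refine ⟨_, _, _, _, _, h.isCrossQuadruple hF x y, ?_, ?_, rfl, hnonMember,
    (card_nonMemberSubfamily_eq_add hxy F).symm⟩
  · rw [← card_erase_add_one hy, ← card_erase_add_one (mem_erase.2 ⟨hxy, hx⟩)]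
  · omega

namespace CrossIntersecting

lemma card_add_two_mul_choose_le_of_card_nonMember_le_two (h : CrossIntersecting F F)
    (hF : F ⊆ X.powersetCard k) (hk : 4 ≤ k) (hX : 2 * k < #X) (hx : x ∈ X) (hy : y ∈ X)
    (hxy : x ≠ y) (hcodegx : 2 < #(F.nonMemberSubfamily x))
    (hcodegy : 2 < #(F.nonMemberSubfamily y))
    (hneither : #((F.nonMemberSubfamily y).nonMemberSubfamily x) ≤ 2) :
    #F + 2 * (#X - k - 1).choose (k - 1) ≤
      (#X - 1).choose (k - 1) + (#X - k - 2).choose (k - 1) + 2 := by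
  obtain ⟨t, rfl⟩ := Nat.exists_eq_add_of_le' (by omega : 2 ≤ k)
  obtain ⟨Y, W, U, V, P, hquad, hY, hcard, rfl, hU, hV⟩ := exists_isCrossQuadruple hF h hx hy hxy
  rw [← hcard, ← hY]
  convert! hquad.card_add_le (by omega) (by omega) hneither (by omega) (by omega) using 4 <;> omega

lemma card_add_two_mul_choose_lt_of_card_nonMember_le_two (h : CrossIntersecting F F)
    (hF : F ⊆ X.powersetCard k) (hk : 5 ≤ k) (hX : 2 * k < #X) (hx : x ∈ X) (hy : y ∈ X)
    (hxy : x ≠ y) (hcodegx : 2 < #(F.nonMemberSubfamily x))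
    (hcodegy : 2 < #(F.nonMemberSubfamily y))
    (hneither : #((F.nonMemberSubfamily y).nonMemberSubfamily x) ≤ 2) :
    #F + 2 * (#X - k - 1).choose (k - 1) <
      (#X - 1).choose (k - 1) + (#X - k - 2).choose (k - 1) + 2 := by
  obtain ⟨t, rfl⟩ := Nat.exists_eq_add_of_le' (by omega : 2 ≤ k)
  obtain ⟨Y, W, U, V, P, hquad, hY, hcard, rfl, hU, hV⟩ := exists_isCrossQuadruple hF h hx hy hxy
  rw [← hcard, ← hY]
  convert! hquad.card_add_lt (by omega) (by omega) hneither (by omega) (by omega) using 4 <;> omega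

end CrossIntersecting

end Splitting

section IntersectingBounds

variable {F : Finset (Finset ℕ)} {d k m : ℕ}

-- Shifting `j` to `i` can lower only the codegree of `i`, and not below the number of members
-- that avoid both `i` and `j`.
lemma exists_isShiftedFrom_or_card_nonMember_le (h : CrossIntersecting F F)
    (hF : F ⊆ (Icc 1 m).powersetCard k)
    (hcodeg : ∀ c ∈ Icc 1 m, d < #(F.nonMemberSubfamily c)) :
    ∃ F' ⊆ (Icc 1 m).powersetCard k, CrossIntersecting F' F' ∧ #F' = #F ∧
      (∀ c ∈ Icc 1 m, d < #(F'.nonMemberSubfamily c)) ∧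
      (IsShiftedFrom 1 F' ∨ ∃ x ∈ Icc 1 m, ∃ y ∈ Icc 1 m, x ≠ y ∧
        #((F'.nonMemberSubfamily y).nonMemberSubfamily x) ≤ d) := by
  induction hN : weight F using Nat.strong_induction_on generalizing F with
  | _ N ih =>
  by_cases hshift : IsShiftedFrom 1 F
  · exact ⟨F, hF, h, rfl, hcodeg, Or.inl hshift⟩
  obtain ⟨i, hi, j, hj, hij, hlt⟩ := exists_weight_compression_lt hF hshift
  by_cases hneither : #((F.nonMemberSubfamily i).nonMemberSubfamily j) ≤ d
  · exact ⟨F, hF, h, rfl, hcodeg, Or.inr ⟨j, hj, i, hi, hij.ne', hneither⟩⟩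
  rw [← UV.card_compression {i} {j} F]
  refine ih _ (hN ▸ hlt) (h.compression i j) (compression_subset_powersetCard hi hF j)
    (fun c hc ↦ ?_) rfl
  rcases eq_or_ne c i with rfl | hci
  · exact (not_le.1 hneither).trans_le
      (card_nonMemberSubfamily_nonMemberSubfamily_le_compression hij.ne F)
  · exact (hcodeg c hc).trans_le (card_nonMemberSubfamily_le_compression hci j F)

namespace CrossIntersecting

lemma card_add_two_mul_choose_le_of_two_lt (h : CrossIntersecting F F)
    (hF : F ⊆ (Icc 1 m).powersetCard k) (hk : 4 ≤ k) (hm : 2 * k < m)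
    (hcodeg : ∀ c ∈ Icc 1 m, 2 < #(F.nonMemberSubfamily c)) :
    #F + 2 * (m - k - 1).choose (k - 1) ≤
      (m - 1).choose (k - 1) + (m - k - 2).choose (k - 1) + 2 := by
  have hone : 1 ∈ Icc 1 m := mem_Icc.2 (by omega)
  obtain ⟨F', hF', h', hcard, hcodeg', hshift | ⟨x, hx, y, hy, hxy, hneither⟩⟩ :=
    exists_isShiftedFrom_or_card_nonMember_le h hF hcodeg
  · have hpair : IsShiftedCrossPair m k F' F' := ⟨hF', hF', hshift, hshift, h'⟩
    exact hcard ▸ hpair.card_add_two_mul_choose_le hk hm.le (by have := hcodeg' 1 hone; omega)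
  · simpa only [hcard, card_Icc_one] using
      h'.card_add_two_mul_choose_le_of_card_nonMember_le_two hF' hk (by rwa [card_Icc_one]) hx hy
        hxy (hcodeg' x hx) (hcodeg' y hy) hneither

lemma card_add_two_mul_choose_lt_of_two_lt (h : CrossIntersecting F F)
    (hF : F ⊆ (Icc 1 m).powersetCard k) (hk : 5 ≤ k) (hm : 2 * k < m)
    (hcodeg : ∀ c ∈ Icc 1 m, 2 < #(F.nonMemberSubfamily c)) :
    #F + 2 * (m - k - 1).choose (k - 1) <
      (m - 1).choose (k - 1) + (m - k - 2).choose (k - 1) + 2 := by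
  have hone : 1 ∈ Icc 1 m := mem_Icc.2 (by omega)
  obtain ⟨F', hF', h', hcard, hcodeg', hshift | ⟨x, hx, y, hy, hxy, hneither⟩⟩ :=
    exists_isShiftedFrom_or_card_nonMember_le h hF hcodeg
  · have hpair : IsShiftedCrossPair m k F' F' := ⟨hF', hF', hshift, hshift, h'⟩
    refine (h.card_add_two_mul_choose_le_of_two_lt hF (by omega) hm hcodeg).lt_of_ne fun heq ↦ ?_
    exact (hpair.card_nonMemberSubfamily_le_two hk hm (by have := hcodeg' 1 hone; omega)
      (hcard ▸ heq)).not_gt (hcodeg' 1 hone)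
  · simpa only [hcard, card_Icc_one] using
      h'.card_add_two_mul_choose_lt_of_card_nonMember_le_two hF' hk (by rwa [card_Icc_one]) hx hy
        hxy (hcodeg' x hx) (hcodeg' y hy) hneither

end CrossIntersecting

end IntersectingBounds

section HiltonMilner

variable {α : Type*} [DecidableEq α] {F 𝓖 : Finset (Finset α)} {X G H : Finset α} {c : α}
  {k r : ℕ}

/-- The family `𝓖` together with the `k`-element subsets of `X` that contain `c` and meet every
member of `𝓖`. The Hilton–Milner family is the case of a single set `𝓖 = {G}`, and `J_i` is the
case `𝓖 = {I_1, I_i}`, `c = 1`. -/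
def hiltonMilnerFamily (X : Finset α) (k : ℕ) (c : α) (𝓖 : Finset (Finset α)) :
    Finset (Finset α) :=
  𝓖 ∪ transversals X k (insert {c} 𝓖)

/-- The sets `G` and `H` are positioned with respect to the element `c` of `X` as `I_1` and `I_2`
are with respect to `1` in the definition of `J_2`. -/
structure IsPairConfig (X : Finset α) (k : ℕ) (c : α) (G H : Finset α) : Prop where
  center_mem : c ∈ X
  left_mem : G ∈ (X.erase c).powersetCard k
  right_mem : H ∈ (X.erase c).powersetCard k
  card_union : #(G ∪ H) = k + 1

lemma CrossIntersecting.subset_hiltonMilnerFamily (h : CrossIntersecting F F)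
    (hF : F ⊆ X.powersetCard k) (c : α) :
    F ⊆ hiltonMilnerFamily X k c (F.nonMemberSubfamily c) := by
  intro A hA
  by_cases hcA : c ∈ A
  · refine mem_union_right _ (mem_filter.2 ⟨hF hA, forall_mem_insert _ _ _ |>.2
      ⟨inter_singleton_nonempty.2 hcA, fun B hB ↦ h A hA B (mem_nonMemberSubfamily.1 hB).1⟩⟩)
  · exact mem_union_left _ (mem_nonMemberSubfamily.2 ⟨hA, hcA⟩)

lemma card_hiltonMilnerFamily (hc : c ∈ X) (h𝓖 : ∀ G ∈ 𝓖, c ∉ G) (r : ℕ) :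
    #(hiltonMilnerFamily X (r + 1) c 𝓖) = #𝓖 + #(transversals (X.erase c) r 𝓖) := by
  rw [hiltonMilnerFamily, card_union_of_disjoint, card_transversals_insert_singleton hc h𝓖]
  rw [disjoint_left]
  exact fun A hA hA' ↦ h𝓖 A hA
    (inter_singleton_nonempty.1 ((mem_filter.1 hA').2 {c} (mem_insert_self _ _)))

lemma card_hiltonMilnerFamily_pair (hc : c ∈ X) (hG : G ∈ (X.erase c).powersetCard k)
    (hH : H ∈ (X.erase c).powersetCard k) (hGH : G ≠ H) (hk : 0 < k) :
    #(hiltonMilnerFamily X k c {G, H}) + 2 * (#X - k - 1).choose (k - 1) =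
      (#X - 1).choose (k - 1) + (#X - #(G ∪ H) - 1).choose (k - 1) + 2 := by
  obtain ⟨r, rfl⟩ := Nat.exists_eq_succ_of_ne_zero hk.ne'
  rw [mem_powersetCard] at hG hH
  have hpair := card_transversals_pair hG.1 hH.1 r
  have hcG : ∀ S ∈ ({G, H} : Finset (Finset α)), c ∉ S := by
    simp only [mem_insert, mem_singleton, forall_eq_or_imp, forall_eq]
    exact ⟨(subset_erase.1 hG.1).2, (subset_erase.1 hH.1).2⟩
  rw [Nat.succ_eq_add_one, card_hiltonMilnerFamily hc hcG, card_pair hGH, Nat.add_sub_cancel,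
    Nat.sub_right_comm, Nat.sub_right_comm #X #(G ∪ H), ← card_erase_of_mem hc]
  rw [hG.2, hH.2, Nat.succ_eq_add_one] at hpair
  omega

namespace CrossIntersecting

lemma exists_isPairConfig_or_lt (h : CrossIntersecting F F) (hF : F ⊆ X.powersetCard k)
    (hk : 2 ≤ k) (hX : 2 * k < #X) (hc : c ∈ X) (hcodeg : #(F.nonMemberSubfamily c) = 2) :
    (∃ G H, IsPairConfig X k c G H ∧ F ⊆ hiltonMilnerFamily X k c {G, H}) ∨
    #F + 2 * (#X - k - 1).choose (k - 1) <
      (#X - 1).choose (k - 1) + (#X - k - 2).choose (k - 1) + 2 := by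
  obtain ⟨G, H, hGH, hnonMember⟩ := card_eq_two.1 hcodeg
  have hsub := h.subset_hiltonMilnerFamily hF c
  have hpair := nonMemberSubfamily_subset_powersetCard hF c
  rw [hnonMember] at hsub hpair
  have hG := hpair (mem_insert_self G {H})
  have hH := hpair (mem_insert_of_mem (mem_singleton_self H))
  have hcard := card_hiltonMilnerFamily_pair hc hG hH hGH (by omega)
  have hle := card_le_card hsub
  have hunion := card_lt_card_union
    ((mem_powersetCard.1 hG).2.trans (mem_powersetCard.1 hH).2.symm) hGH
  rw [(mem_powersetCard.1 hG).2] at hunion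
  rcases Nat.eq_or_lt_of_le hunion with heq | hlt
  · exact Or.inl ⟨G, H, ⟨hc, hG, hH, heq.symm⟩, hsub⟩
  · right
    obtain ⟨r, rfl⟩ := Nat.exists_eq_add_of_le' hk
    have hmono : (#X - #(G ∪ H) - 1).choose (r + 1) ≤ (#X - (r + 5)).choose (r + 1) :=
      Nat.choose_le_choose _ (by omega)
    have hsucc := choose_sub_eq_add (by omega : r + 4 < #X) r
    have hpos : 0 < (#X - (r + 5)).choose r := Nat.choose_pos (by omega)
    simp only [Nat.sub_sub, Nat.add_assoc, Nat.reduceAdd, Nat.reduceSubDiff] at *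
    omega

end CrossIntersecting

namespace IsPairConfig

lemma ne (h : IsPairConfig X k c G H) : G ≠ H := by
  rintro rfl
  have := h.card_union
  rw [union_self, (mem_powersetCard.1 h.left_mem).2] at this
  omega

lemma pos (h : IsPairConfig X k c G H) : 0 < k := by
  have hcard := card_union_le G H
  rw [h.card_union, (mem_powersetCard.1 h.left_mem).2, (mem_powersetCard.1 h.right_mem).2] at hcard
  omega

lemma card_hiltonMilnerFamily (h : IsPairConfig X k c G H) :
    #(hiltonMilnerFamily X k c {G, H}) + 2 * (#X - k - 1).choose (k - 1) =
      (#X - 1).choose (k - 1) + (#X - k - 2).choose (k - 1) + 2 := by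
  rw [card_hiltonMilnerFamily_pair h.center_mem h.left_mem h.right_mem h.ne h.pos, h.card_union,
    Nat.sub_sub _ (k + 1), Nat.sub_sub]

end IsPairConfig

lemma image_hiltonMilnerFamily (σ : Equiv.Perm α) (X : Finset α) (k : ℕ) (c : α)
    (𝓖 : Finset (Finset α)) : (hiltonMilnerFamily X k c 𝓖).image (·.image σ) =
      hiltonMilnerFamily (X.image σ) k (σ c) (𝓖.image (·.image σ)) := by
  have hmeet (S T : Finset α) : (S.image σ ∩ T.image σ).Nonempty ↔ (S ∩ T).Nonempty := by
    rw [← image_inter _ _ σ.injective, image_nonempty]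
  have hinsert : insert {σ c} (𝓖.image (·.image σ)) = (insert {c} 𝓖).image (·.image σ) := by
    rw [image_insert, image_singleton]
  rw [hiltonMilnerFamily, image_union, hiltonMilnerFamily, hinsert]
  congr 1
  simp only [transversals, forall_mem_image]
  ext S
  obtain ⟨S, rfl⟩ : ∃ T : Finset α, T.image σ = S :=
    ⟨S.image σ.symm, by rw [image_image, Equiv.self_comp_symm, image_id]⟩
  simp only [mem_filter, mem_powersetCard, (image_injective σ.injective).mem_finset_image,
    card_image_of_injective _ σ.injective, image_subset_image_iff σ.injective, hmeet]

end HiltonMilner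

section Isomorphism

lemma exists_perm_of_card_fiber_eq {α κ : Type*} [DecidableEq κ] (X : Finset α) (f g : α → κ)
    (hfg : ∀ p, #{x ∈ X | f x = p} = #{x ∈ X | g x = p}) :
    ∃ σ : Equiv.Perm α, (∀ x, x ∈ X ↔ σ x ∈ X) ∧ ∀ x ∈ X, g (σ x) = f x := by
  classical
  have hcard (f : α → κ) (p : κ) : Fintype.card {a : X // f a = p} = #{x ∈ X | f x = p} := by
    rw [Fintype.card_subtype, univ_eq_attach, filter_attach (f · = p), card_map, card_attach]
  let e (p : κ) : {a : X // f a = p} ≃ {a : X // g a = p} :=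
    Fintype.equivOfCardEq (by rw [hcard, hcard, hfg])
  let τ : Equiv.Perm X := Equiv.ofFiberEquiv (f := fun a : X ↦ f a) (g := fun a : X ↦ g a) e
  refine ⟨Equiv.Perm.ofSubtype τ, fun x ↦ (Equiv.Perm.ofSubtype_apply_mem_iff_mem τ x).symm,
    fun x hx ↦ ?_⟩
  rw [Equiv.Perm.ofSubtype_apply_of_mem τ hx]
  exact Equiv.ofFiberEquiv_map e ⟨x, hx⟩

variable {α : Type*} [DecidableEq α] {X G H G' H' : Finset α} {c c' : α} {k : ℕ}

namespace IsPairConfig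

lemma card_filter_decide_eq (h : IsPairConfig X k c G H) (p : Bool × Bool × Bool) :
    #{x ∈ X | (decide (x = c), decide (x ∈ G), decide (x ∈ H)) = p} =
      match p with
      | (true, false, false) => 1
      | (false, true, true) => k - 1
      | (false, true, false) => 1
      | (false, false, true) => 1
      | (false, false, false) => #X - (k + 2)
      | _ => 0 := by
  obtain ⟨hc, hG, hH, hcard⟩ := h
  simp only [mem_powersetCard, subset_erase] at hG hH
  obtain ⟨⟨hGX, hcG⟩, hG⟩ := hG
  obtain ⟨⟨hHX, hcH⟩, hH⟩ := hH
  have hboth : #(G ∩ H) = k - 1 := by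
    have := card_union_add_card_inter G H
    omega
  have hleft : #(G \ H) = 1 := by
    have := card_sdiff_add_card G H
    omega
  have hright : #(H \ G) = 1 := by
    have := card_sdiff_add_card H G
    rw [union_comm] at this
    omega
  have houter : #(X \ insert c (G ∪ H)) = #X - (k + 2) := by
    rw [card_sdiff_of_subset (insert_subset hc (union_subset hGX hHX)),
      card_insert_of_notMem (by simp only [mem_union, hcG, hcH, or_self, not_false_eq_true]), hcard]
  have hregion {S : Finset α} {m : ℕ} (hS : #S = m) (hmem : ∀ x, x ∈ S ↔
      x ∈ X ∧ decide (x = c) = p.1 ∧ decide (x ∈ G) = p.2.1 ∧ decide (x ∈ H) = p.2.2) :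
      #{x ∈ X | (decide (x = c), decide (x ∈ G), decide (x ∈ H)) = p} = m := by
    rw [← hS]
    exact congrArg card (ext fun x ↦ by rw [mem_filter, hmem, Prod.ext_iff, Prod.ext_iff])
  match p with
  | (true, false, false) => exact hregion (card_singleton c) (by grind)
  | (false, true, true) => exact hregion hboth (by grind)
  | (false, true, false) => exact hregion hleft (by grind)
  | (false, false, true) => exact hregion hright (by grind)
  | (false, false, false) => exact hregion houter (by grind)
  | (true, true, _) | (true, false, true) => exact hregion card_empty (by grind)

lemma exists_perm (h : IsPairConfig X k c G H) (h' : IsPairConfig X k c' G' H') :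
    ∃ σ : Equiv.Perm α, (∀ x, x ∈ X ↔ σ x ∈ X) ∧ σ c = c' ∧ G.image σ = G' ∧ H.image σ = H' := by
  obtain ⟨σ, hσX, hσ⟩ := exists_perm_of_card_fiber_eq X
    (fun x ↦ (decide (x = c), decide (x ∈ G), decide (x ∈ H)))
    (fun x ↦ (decide (x = c'), decide (x ∈ G'), decide (x ∈ H')))
    fun p ↦ by rw [h.card_filter_decide_eq, h'.card_filter_decide_eq]
  simp only [Prod.mk.injEq, decide_eq_decide] at hσ
  have himage {S S' : Finset α} (hS : S ∈ (X.erase c).powersetCard k)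
      (hS' : S' ∈ (X.erase c').powersetCard k) (hmem : ∀ x ∈ X, σ x ∈ S' ↔ x ∈ S) :
      S.image σ = S' := by
    rw [mem_powersetCard] at hS hS'
    refine eq_of_subset_of_card_le (image_subset_iff.2 fun x hx ↦
      (hmem x (mem_of_mem_erase (hS.1 hx))).2 hx) ?_
    rw [card_image_of_injective _ σ.injective, hS.2, hS'.2]
  exact ⟨σ, hσX, (hσ c h.center_mem).1.2 rfl,
    himage h.left_mem h'.left_mem fun x hx ↦ (hσ x hx).2.1,
    himage h.right_mem h'.right_mem fun x hx ↦ (hσ x hx).2.2⟩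

lemma exists_perm_image_hiltonMilnerFamily (h : IsPairConfig X k c G H)
    (h' : IsPairConfig X k c' G' H') : ∃ σ : Equiv.Perm α, (∀ x, x ∈ X ↔ σ x ∈ X) ∧
      hiltonMilnerFamily X k c' {G', H'} =
        (hiltonMilnerFamily X k c {G, H}).image (·.image σ) := by
  obtain ⟨σ, hσX, hc, hG, hH⟩ := h.exists_perm h'
  have hX : X.image σ = X := eq_of_subset_of_card_le (image_subset_iff.2 fun x ↦ (hσX x).1)
    (card_image_of_injective _ σ.injective).ge
  exact ⟨σ, hσX, by rw [image_hiltonMilnerFamily, image_insert, image_singleton, hX, hc, hG, hH]⟩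

end IsPairConfig

end Isomorphism

section HanKohayakawa

variable {F : Finset (Finset ℕ)} {G H : Finset ℕ} {c k n : ℕ}

lemma isPairConfig_Icc (hk : 0 < k) (hkn : k + 2 ≤ n) :
    IsPairConfig (Icc 1 n) k 1 (Icc 2 (k + 1)) (Icc 3 (k + 2)) where
  center_mem := mem_Icc.2 (by omega)
  left_mem := mem_powersetCard.2 ⟨fun x ↦ by simp only [mem_erase, mem_Icc]; omega,
    by rw [Nat.card_Icc]; omega⟩
  right_mem := mem_powersetCard.2 ⟨fun x ↦ by simp only [mem_erase, mem_Icc]; omega,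
    by rw [Nat.card_Icc]; omega⟩
  card_union := by
    have hunion : Icc 2 (k + 1) ∪ Icc 3 (k + 2) = Icc 2 (k + 2) := by
      ext x
      simp only [mem_union, mem_Icc]
      omega
    rw [hunion, Nat.card_Icc]
    omega

lemma Jfam_two (n k : ℕ) :
    Jfam n k 2 = hiltonMilnerFamily (Icc 1 n) k 1 {Icc 2 (k + 1), Icc 3 (k + 2)} := by
  simp only [Jfam, hiltonMilnerFamily, transversals, forall_mem_insert, mem_singleton, forall_eq,
    inter_singleton_nonempty, Nat.reduceAdd]

lemma IsPairConfig.isoFam_Jfam_two (h : IsPairConfig (Icc 1 n) k c G H) (hkn : k + 2 ≤ n) :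
    isoFam n (Jfam n k 2) (hiltonMilnerFamily (Icc 1 n) k c {G, H}) :=
  Jfam_two n k ▸ (isPairConfig_Icc h.pos hkn).exists_perm_image_hiltonMilnerFamily h

lemma two_le_card_nonMemberSubfamily_of_diversity (hF : 2 ≤ diversity n F) (hc : c ∈ Icc 1 n) :
    2 ≤ #(F.nonMemberSubfamily c) := by
  have hdeg : deg F c ≤ maxDeg n F := le_sup hc
  have hcard : deg F c + #(F.nonMemberSubfamily c) = #F :=
    card_filter_add_card_filter_not (c ∈ ·)
  rw [diversity] at hF
  omega

namespace CrossIntersecting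

lemma card_add_two_mul_choose_le_of_two_le (h : CrossIntersecting F F)
    (hF : F ⊆ (Icc 1 n).powersetCard k) (hk : 4 ≤ k) (hn : 2 * k < n)
    (hcodeg : ∀ c ∈ Icc 1 n, 2 ≤ #(F.nonMemberSubfamily c)) :
    #F + 2 * (n - k - 1).choose (k - 1) ≤
      (n - 1).choose (k - 1) + (n - k - 2).choose (k - 1) + 2 := by
  by_cases htwo : ∀ c ∈ Icc 1 n, 2 < #(F.nonMemberSubfamily c)
  · exact h.card_add_two_mul_choose_le_of_two_lt hF hk hn htwo
  push Not at htwo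
  obtain ⟨c, hc, hc2⟩ := htwo
  have hpair := h.exists_isPairConfig_or_lt hF (by omega) (by rwa [card_Icc_one]) hc
    (hc2.antisymm (hcodeg c hc))
  rw [card_Icc_one] at hpair
  rcases hpair with ⟨G, H, hGH, hsub⟩ | hlt
  · have hcard := hGH.card_hiltonMilnerFamily
    rw [card_Icc_one] at hcard
    exact hcard ▸ Nat.add_le_add_right (card_le_card hsub) _
  · exact hlt.le

lemma isoFam_Jfam_two_of_card_eq (h : CrossIntersecting F F)
    (hF : F ⊆ (Icc 1 n).powersetCard k) (hk : 5 ≤ k) (hn : 2 * k < n)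
    (hcodeg : ∀ c ∈ Icc 1 n, 2 ≤ #(F.nonMemberSubfamily c))
    (hcard : #F + 2 * (n - k - 1).choose (k - 1) =
      (n - 1).choose (k - 1) + (n - k - 2).choose (k - 1) + 2) :
    isoFam n (Jfam n k 2) F := by
  by_cases htwo : ∀ c ∈ Icc 1 n, 2 < #(F.nonMemberSubfamily c)
  · exact absurd hcard (h.card_add_two_mul_choose_lt_of_two_lt hF hk hn htwo).ne
  push Not at htwo
  obtain ⟨c, hc, hc2⟩ := htwo
  have hpair := h.exists_isPairConfig_or_lt hF (by omega) (by rwa [card_Icc_one]) hc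
    (hc2.antisymm (hcodeg c hc))
  rw [card_Icc_one] at hpair
  obtain ⟨G, H, hGH, hsub⟩ := hpair.resolve_right hcard.not_lt
  have hcardJ := hGH.card_hiltonMilnerFamily
  rw [card_Icc_one] at hcardJ
  rw [eq_of_subset_of_card_le hsub (by omega)]
  exact hGH.isoFam_Jfam_two (by omega)

end CrossIntersecting

end HanKohayakawa

/-- Han–Kohayakawa: for `n > 2k`, `k ≥ 4`, every intersecting `F ⊆ C([n],k)` with `γ(F) ≥ 2`
satisfies `|F| ≤ C(n-1,k-1) - C(n-k-1,k-1) - C(n-k-2,k-2) + 2`; for `k ≥ 5` equality holds only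
for families isomorphic to `J_2`. -/
theorem han_kohayakawa (n k : ℕ) (hk : 4 ≤ k) (hnk : 2 * k < n)
    (F : Finset (Finset ℕ)) (hF : F ⊆ (Finset.Icc 1 n).powersetCard k)
    (hint : ∀ A ∈ F, ∀ B ∈ F, (A ∩ B).Nonempty)
    (hdiv : 2 ≤ diversity n F) :
    (F.card : ℤ) ≤ ((n - 1).choose (k - 1) : ℤ) - ((n - k - 1).choose (k - 1) : ℤ)
      - ((n - k - 2).choose (k - 2) : ℤ) + 2 ∧
    (5 ≤ k → (F.card : ℤ) = ((n - 1).choose (k - 1) : ℤ) - ((n - k - 1).choose (k - 1) : ℤ)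
      - ((n - k - 2).choose (k - 2) : ℤ) + 2 → isoFam n (Jfam n k 2) F) := by
  have hcross : CrossIntersecting F F := hint
  have hcodeg : ∀ c ∈ Icc 1 n, 2 ≤ #(F.nonMemberSubfamily c) := fun _ ↦
    two_le_card_nonMemberSubfamily_of_diversity hdiv
  have hpascal : (n - k - 1).choose (k - 1) =
      (n - k - 2).choose (k - 2) + (n - k - 2).choose (k - 1) :=
    Nat.choose_eq_choose_pred_add (by omega) (by omega)
  have hle := hcross.card_add_two_mul_choose_le_of_two_le hF hk hnk hcodeg
  exact ⟨by omega, fun hk5 heq ↦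
    hcross.isoFam_Jfam_two_of_card_eq hF hk5 hnk hcodeg (by omega)⟩
end

section
/- Let n > 2k ≥ 6 and let F ⊆ C([n],k) be an intersecting family with γ(F) ≤ C(n-4,k-3). Then Δ(F) + ((n-k-2)/(k-2))·γ(F) ≤ C(n-1,k-1). If additionally F is non-trivial (no common element in all sets), then Δ(F) + ((n-k-2)/(k-2))·γ(F) ≤ C(n-1,k-1) - C(n-k-1,k-1) + (n-k-2)/(k-2). -/
open Finset

/-!
Fix a point `x` of maximal degree and delete it from the sets of `F` containing it. The resulting
`(k-1)`-sets meet every member of `F` avoiding `x`, so they are distinct from the `(k-1)`-sets in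
the `(n-2k)`-fold shadow of the complements of those members. It remains to bound that shadow from
below. By Kruskal–Katona the complements may be replaced by an initial segment `𝒞` of the
colexicographic order: it contains the initial interval `K`, and `γ(F) ≤ C(n-4,k-3)` confines it to
the first `n - 4` points. The shadow of `𝒞` contains all `(k-1)`-subsets of `K` and, disjoint from
them, the sets obtained from the other members by deleting non-maximal elements; the latter are
counted through the pairs `T ⊆ S` with the same maximum.
-/

open scoped FinsetFamily

section TopShadow

variable {α : Type*} [LinearOrder α] {𝒜 : Finset (Finset α)} {S T K : Finset α} {j r M : ℕ}

/-- The part of the `j`-fold shadow obtained by deleting `j` non-maximal elements from a member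
of `𝒜`. -/
def topShadow (j : ℕ) (𝒜 : Finset (Finset α)) : Finset (Finset α) :=
  {T ∈ ∂^[j] 𝒜 | ∃ S ∈ 𝒜, T ⊆ S ∧ T.max = S.max}

theorem choose_le_card_filter_topShadow (h𝒜 : (𝒜 : Set (Finset α)).Sized (r + j + 1))
    (hS : S ∈ 𝒜) :
    (r + j).choose r ≤ #{T ∈ topShadow j 𝒜 | T ⊆ S ∧ T.max = S.max} := by
  have hcard : #S = r + j + 1 := h𝒜 hS
  have hne : S.Nonempty := card_pos.1 (by omega)
  set m := S.max' hne
  have hmS : m ∈ S := S.max'_mem hne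
  have hm (T) (hT : T ∈ powersetCard r (S.erase m)) : m ∉ T := fun h =>
    notMem_erase m S ((mem_powersetCard.1 hT).1 h)
  calc (r + j).choose r
      = #(powersetCard r (S.erase m)) := by
        rw [card_powersetCard, card_erase_of_mem hmS, hcard, Nat.add_sub_cancel]
    _ ≤ _ := card_le_card_of_injOn (insert m) (fun T hT => ?_) fun T hT U hU hTU => ?_
  · obtain ⟨hTS, hTr⟩ := mem_powersetCard.1 hT
    have hsub : insert m T ⊆ S := insert_subset hmS (hTS.trans (erase_subset _ _))
    have hmax : (insert m T).max = S.max := (max_mono hsub).antisymm <| by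
      rw [← coe_max' hne]
      exact le_max (mem_insert_self m T)
    have hshadow : insert m T ∈ ∂^[j] 𝒜 := mem_shadow_iterate_iff_exists_mem_card_add.2
      ⟨S, hS, hsub, by rw [card_insert_of_notMem (hm T hT), hTr, hcard]; omega⟩
    exact mem_filter.2 ⟨mem_filter.2 ⟨hshadow, S, hS, hsub, hmax⟩, hsub, hmax⟩
  · rw [← erase_insert (hm T hT), ← erase_insert (hm U hU), hTU]

theorem not_subset_of_mem_topShadow_erase (h𝒜 : (𝒜 : Set (Finset α)).Sized r) (hK : K ∈ 𝒜)
    (hlower : IsLowerSet (K : Set α)) (hT : T ∈ topShadow j (𝒜.erase K)) : ¬T ⊆ K := by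
  intro hTK
  obtain ⟨-, S, hS, -, hmax⟩ := mem_filter.1 hT
  obtain ⟨hSK, hS𝒜⟩ := mem_erase.1 hS
  refine hSK (eq_of_subset_of_card_le (fun i hi => ?_) ((h𝒜 hK).trans (h𝒜 hS𝒜).symm).le)
  obtain ⟨b, hb⟩ := max_of_mem hi
  exact hlower (le_max_of_eq hi hb) (hTK (mem_of_max (hmax.trans hb)))

variable [LocallyFiniteOrderBot α]

theorem card_filter_le_of_mem_topShadow (h𝒜 : (𝒜 : Set (Finset α)).Sized (r + j + 1))
    (hM : ∀ S ∈ 𝒜, ∀ b ∈ S, #(Iio b) ≤ M) (hT : T ∈ topShadow j 𝒜) :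
    #{S ∈ 𝒜 | T ⊆ S ∧ T.max = S.max} ≤ (M - r).choose j := by
  obtain ⟨hTshadow, S₀, hS₀, hTS₀, -⟩ := mem_filter.1 hT
  have hTcard : #T = r + 1 := by
    have := h𝒜.shadow_iterate hTshadow
    omega
  have hne : T.Nonempty := card_pos.1 (by omega)
  set b := T.max' hne
  have hbT : b ∈ T := T.max'_mem hne
  have hbelow : #(Iio b \ T) ≤ M - r := by
    have herase : T.erase b ⊆ Iio b := fun i hi => mem_Iio.2 (lt_max'_of_mem_erase_max' T hne hi)
    have hsdiff : Iio b \ T ⊆ Iio b \ T.erase b := sdiff_subset_sdiff le_rfl (erase_subset _ _)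
    calc #(Iio b \ T) ≤ #(Iio b \ T.erase b) := card_le_card hsdiff
      _ = #(Iio b) - r := by
        rw [card_sdiff_of_subset herase, card_erase_of_mem hbT, hTcard, Nat.add_sub_cancel]
      _ ≤ M - r := Nat.sub_le_sub_right (hM S₀ hS₀ b (hTS₀ hbT)) r
  calc #{S ∈ 𝒜 | T ⊆ S ∧ T.max = S.max}
      ≤ #(powersetCard j (Iio b \ T)) :=
        card_le_card_of_injOn (· \ T) (fun S hS => ?_) fun S hS U hU (hSU : S \ T = U \ T) => ?_
    _ = (#(Iio b \ T)).choose j := card_powersetCard _ _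
    _ ≤ (M - r).choose j := Nat.choose_le_choose j hbelow
  · obtain ⟨hS𝒜, hTS, hmax⟩ := mem_filter.1 hS
    refine mem_powersetCard.2 ⟨fun i hi => ?_, ?_⟩
    · obtain ⟨hiS, hiT⟩ := mem_sdiff.1 hi
      have hib : i ≤ b := by
        rw [← WithBot.coe_le_coe, coe_max', hmax]
        exact le_max hiS
      exact mem_sdiff.2 ⟨mem_Iio.2 (hib.lt_of_ne (ne_of_mem_of_not_mem hbT hiT).symm), hiT⟩
    · rw [card_sdiff_of_subset hTS, h𝒜 hS𝒜, hTcard]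
      omega
  · rw [← sdiff_union_of_subset (mem_filter.1 hS).2.1,
      ← sdiff_union_of_subset (mem_filter.1 hU).2.1, hSU]

theorem card_mul_choose_le_card_topShadow_mul (h𝒜 : (𝒜 : Set (Finset α)).Sized (r + j + 1))
    (hM : ∀ S ∈ 𝒜, ∀ b ∈ S, #(Iio b) ≤ M) :
    #𝒜 * (r + j).choose r ≤ #(topShadow j 𝒜) * (M - r).choose j :=
  card_mul_le_card_mul (fun S T : Finset α => T ⊆ S ∧ T.max = S.max)
    (fun _ hS => choose_le_card_filter_topShadow h𝒜 hS)
    fun _ hT => card_filter_le_of_mem_topShadow h𝒜 hM hT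

end TopShadow

section ColexInitialSegments

open Colex

variable {α : Type*} [LinearOrder α] {𝒞 : Finset (Finset α)} {K L : Finset α} {r c : ℕ}

theorem isInitSeg_powersetCard (hL : IsLowerSet (L : Set α)) (r : ℕ) :
    IsInitSeg (powersetCard r L) r := by
  refine ⟨Set.sized_powersetCard L r, fun A B hA ⟨hBA, hB⟩ => mem_powersetCard.2 ⟨?_, hB⟩⟩
  intro t ht
  by_contra htL
  have hlt : ∀ a ∈ A, a < t := fun a ha =>
    not_le.1 fun hta => htL (hL hta ((mem_powersetCard.1 hA).1 ha))
  exact (forall_lt_mono hBA.le hlt t ht).false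

theorem subset_powersetCard_of_isInitSeg (h𝒞 : IsInitSeg 𝒞 r) (hL : IsLowerSet (L : Set α))
    (hcard : #𝒞 ≤ (#L).choose r) : 𝒞 ⊆ powersetCard r L := by
  rcases h𝒞.total (isInitSeg_powersetCard hL r) with h | h
  · exact h
  · exact (eq_of_subset_of_card_le h (by rwa [card_powersetCard])).ge

theorem mem_of_isInitSeg (h𝒞 : IsInitSeg 𝒞 #K) (hne : 𝒞.Nonempty)
    (hK : IsLowerSet (K : Set α)) : K ∈ 𝒞 := by
  have hinit : IsInitSeg {K} #K := powersetCard_self K ▸ isInitSeg_powersetCard hK #K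
  rcases h𝒞.total hinit with h | h
  · exact (subset_singleton_iff.1 h).resolve_left hne.ne_empty ▸ mem_singleton_self K
  · exact h (mem_singleton_self K)

theorem exists_isInitSeg_card_eq [Fintype α] (hc : c ≤ (Fintype.card α).choose r) :
    ∃ 𝒞 : Finset (Finset α), IsInitSeg 𝒞 r ∧ #𝒞 = c := by
  induction c with
  | zero => exact ⟨∅, isInitSeg_empty, card_empty⟩
  | succ c ih =>
    obtain ⟨𝒞, h𝒞, hcard⟩ := ih (by omega)
    have hmissing : (powersetCard r univ \ 𝒞).Nonempty := by
      refine sdiff_nonempty.2 fun h => ?_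
      have := card_le_card h
      rw [card_powersetCard, card_univ] at this
      omega
    obtain ⟨A, hA, hmin⟩ := exists_min_image _ toColex hmissing
    obtain ⟨hAr, hA𝒞⟩ := mem_sdiff.1 hA
    refine ⟨insert A 𝒞, ⟨?_, ?_⟩, by rw [card_insert_of_notMem hA𝒞, hcard]⟩
    · rw [coe_insert, ← Set.singleton_union, Set.sized_union]
      exact ⟨Set.sized_singleton.2 (mem_powersetCard_univ.1 hAr), h𝒞.1⟩
    · rintro S T hS ⟨hTS, hT⟩
      rcases mem_insert.1 hS with rfl | hS
      · by_contra hTnot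
        have hTmissing : T ∈ powersetCard r univ \ 𝒞 := mem_sdiff.2
          ⟨mem_powersetCard_univ.2 hT, fun h => hTnot (mem_insert_of_mem h)⟩
        exact (hmin T hTmissing).not_gt hTS
      · exact mem_insert_of_mem (h𝒞.2 hS ⟨hTS, hT⟩)

end ColexInitialSegments

section KruskalKatona

theorem card_mul_choose_add_le_of_isLowerSet_mem {α : Type*} [LinearOrder α]
    [LocallyFiniteOrderBot α] {𝒜 : Finset (Finset α)} {K : Finset α} {r j M : ℕ}
    (h𝒜 : (𝒜 : Set (Finset α)).Sized (r + j + 1)) (hM : ∀ S ∈ 𝒜, ∀ b ∈ S, #(Iio b) ≤ M)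
    (hK : K ∈ 𝒜) (hlower : IsLowerSet (K : Set α)) :
    #𝒜 * (r + j).choose r + (r + j + 1).choose (r + 1) * (M - r).choose j
      ≤ #(∂^[j] 𝒜) * (M - r).choose j + (r + j).choose r := by
  set 𝒯 := topShadow j (𝒜.erase K)
  have h𝒯 : #(𝒜.erase K) * (r + j).choose r ≤ #𝒯 * (M - r).choose j :=
    card_mul_choose_le_card_topShadow_mul (h𝒜.mono (coe_subset.2 (erase_subset K 𝒜)))
      fun S hS => hM S (mem_of_mem_erase hS)
  have hdisj : Disjoint (powersetCard (r + 1) K) 𝒯 := disjoint_left.2 fun T hTK hT𝒯 =>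
    not_subset_of_mem_topShadow_erase h𝒜 hK hlower hT𝒯 (mem_powersetCard.1 hTK).1
  have hsub : powersetCard (r + 1) K ∪ 𝒯 ⊆ ∂^[j] 𝒜 := by
    refine union_subset (fun T hT => ?_) ((filter_subset _ _).trans ?_)
    · obtain ⟨hTK, hTr⟩ := mem_powersetCard.1 hT
      exact mem_shadow_iterate_iff_exists_mem_card_add.2
        ⟨K, hK, hTK, by rw [h𝒜 hK, hTr]; omega⟩
    · exact shadow_monotone.iterate j (erase_subset K 𝒜)
  have hshadow : (r + j + 1).choose (r + 1) + #𝒯 ≤ #(∂^[j] 𝒜) := by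
    simpa only [card_union_of_disjoint hdisj, card_powersetCard, h𝒜 hK] using card_le_card hsub
  calc #𝒜 * (r + j).choose r + (r + j + 1).choose (r + 1) * (M - r).choose j
      = #(𝒜.erase K) * (r + j).choose r + (r + j + 1).choose (r + 1) * (M - r).choose j
          + (r + j).choose r := by rw [← card_erase_add_one hK]; ring
    _ ≤ #𝒯 * (M - r).choose j + (r + j + 1).choose (r + 1) * (M - r).choose j
          + (r + j).choose r := by gcongr
    _ = ((r + j + 1).choose (r + 1) + #𝒯) * (M - r).choose j + (r + j).choose r := by ring
    _ ≤ #(∂^[j] 𝒜) * (M - r).choose j + (r + j).choose r := by gcongr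

variable {N r j M : ℕ} {𝒜 : Finset (Finset (Fin N))}

theorem isLowerSet_filter_val_lt (N m : ℕ) :
    IsLowerSet (({i | i.val < m} : Finset (Fin N)) : Set (Fin N)) :=
  fun _ _ hle hlt =>
    mem_filter.2 ⟨mem_univ _, lt_of_le_of_lt (Fin.le_def.1 hle) (mem_filter.1 hlt).2⟩

theorem card_mul_choose_add_le_card_shadow_iterate
    (h𝒜 : (𝒜 : Set (Finset (Fin N))).Sized (r + j + 1)) (hne : 𝒜.Nonempty)
    (hcard : #𝒜 ≤ (M + 1).choose (r + j + 1)) :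
    #𝒜 * (r + j).choose r + (r + j + 1).choose (r + 1) * (M - r).choose j
      ≤ #(∂^[j] 𝒜) * (M - r).choose j + (r + j).choose r := by
  have hsize : r + j + 1 ≤ N := by
    obtain ⟨S, hS⟩ := hne
    simpa only [h𝒜 hS, Fintype.card_fin] using S.card_le_univ
  have hcardN : #𝒜 ≤ N.choose (r + j + 1) := by simpa only [Fintype.card_fin] using h𝒜.card_le
  obtain ⟨𝒞, h𝒞, h𝒞card⟩ := exists_isInitSeg_card_eq (α := Fin N) (r := r + j + 1) (c := #𝒜)
    (by rwa [Fintype.card_fin])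
  have h𝒞ne : 𝒞.Nonempty := card_pos.1 (h𝒞card ▸ hne.card_pos)
  set K : Finset (Fin N) := {i | i.val < r + j + 1}
  have hKcard : #K = r + j + 1 := by rw [Fin.card_filter_val_lt, min_eq_right hsize]
  have hKlower : IsLowerSet (K : Set (Fin N)) := isLowerSet_filter_val_lt N _
  have hK : K ∈ 𝒞 := mem_of_isInitSeg (hKcard ▸ h𝒞) h𝒞ne hKlower
  have h𝒞sub : 𝒞 ⊆ powersetCard (r + j + 1) {i : Fin N | i.val < M + 1} := by
    refine subset_powersetCard_of_isInitSeg h𝒞 (isLowerSet_filter_val_lt N _) ?_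
    rw [h𝒞card, Fin.card_filter_val_lt]
    rcases min_choice N (M + 1) with h | h <;> rwa [h]
  have hM (S) (hS : S ∈ 𝒞) (b) (hb : b ∈ S) : #(Iio b) ≤ M := by
    rw [Fin.card_Iio]
    exact Nat.lt_succ_iff.1 (mem_filter.1 ((mem_powersetCard.1 (h𝒞sub hS)).1 hb)).2
  calc #𝒜 * (r + j).choose r + (r + j + 1).choose (r + 1) * (M - r).choose j
      ≤ #(∂^[j] 𝒞) * (M - r).choose j + (r + j).choose r :=
        h𝒞card ▸ card_mul_choose_add_le_of_isLowerSet_mem h𝒞.1 hM hK hKlower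
    _ ≤ #(∂^[j] 𝒜) * (M - r).choose j + (r + j).choose r := by
        have hkk : #(∂^[j] 𝒞) ≤ #(∂^[j] 𝒜) := iterated_kk h𝒜 h𝒞card.le h𝒞
        gcongr

-- From here on `a = k - 3` and `j = n - 2 * k`, which avoids truncated subtraction.
theorem card_mul_add_le_card_shadow_iterate {a : ℕ}
    (h𝒜 : (𝒜 : Set (Finset (Fin N))).Sized (a + j + 2)) (hne : 𝒜.Nonempty)
    (hcard : #𝒜 ≤ (2 * a + j + 2).choose a) :
    #𝒜 * (a + j + 1) + (a + j + 2).choose (a + 2) * (a + 1)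
      ≤ #(∂^[j] 𝒜) * (a + 1) + (a + j + 1) := by
  have hsize : a + 1 + j + 1 = a + j + 2 := by ring
  have hcard' : #𝒜 ≤ (2 * a + j + 1 + 1).choose (a + 1 + j + 1) :=
    hcard.trans_eq (Nat.choose_symm_of_eq_add (by ring))
  have hkk := card_mul_choose_add_le_card_shadow_iterate (hsize ▸ h𝒜) hne hcard'
  have hM : 2 * a + j + 1 - (a + 1) = a + j := by omega
  rw [hM, hsize, add_right_comm a 1 j] at hkk
  have hratio : (a + j + 1).choose (a + 1) * (a + 1) = (a + j + 1) * (a + j).choose j := by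
    rw [← Nat.add_one_mul_choose_eq, Nat.choose_symm_add]
  refine Nat.le_of_mul_le_mul_right ?_ (Nat.choose_pos (Nat.le_add_left j a))
  linear_combination (a + 1) * hkk + #𝒜 * hratio.symm + hratio

end KruskalKatona

section CrossIntersecting

variable {a j : ℕ}

theorem card_mul_add_le_of_cross_intersecting_fin {𝒜 ℬ : Finset (Finset (Fin (2 * a + j + 5)))}
    (h𝒜 : (𝒜 : Set (Finset (Fin (2 * a + j + 5)))).Sized (a + 2))
    (hℬ : (ℬ : Set (Finset (Fin (2 * a + j + 5)))).Sized (a + 3))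
    (hcross : ∀ A ∈ 𝒜, ∀ B ∈ ℬ, ¬Disjoint A B) (hne : ℬ.Nonempty)
    (hcard : #ℬ ≤ (2 * a + j + 2).choose a) :
    #𝒜 * (a + 1) + #ℬ * (a + j + 1) + (a + j + 2).choose (a + 2) * (a + 1)
      ≤ (2 * a + j + 5).choose (a + 2) * (a + 1) + (a + j + 1) := by
  have hcompls : (ℬᶜˢ : Set (Finset (Fin (2 * a + j + 5)))).Sized (a + j + 2) := by
    convert hℬ.compls using 1
    rw [Fintype.card_fin]
    omega
  have hdisj : Disjoint 𝒜 (∂^[j] ℬᶜˢ) := disjoint_right.2 fun A hA hA𝒜 => by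
    obtain ⟨C, hC, hAC, -⟩ := mem_shadow_iterate_iff_exists_sdiff.1 hA
    exact hcross A hA𝒜 Cᶜ (mem_compls.1 hC) (disjoint_compl_right.mono_left hAC)
  have hsized :
      ((𝒜 ∪ ∂^[j] ℬᶜˢ : Finset _) : Set (Finset (Fin (2 * a + j + 5)))).Sized (a + 2) := by
    rw [coe_union, Set.sized_union]
    refine ⟨h𝒜, ?_⟩
    convert hcompls.shadow_iterate using 1
    omega
  have hunion : #𝒜 + #(∂^[j] ℬᶜˢ) ≤ (2 * a + j + 5).choose (a + 2) := by
    simpa only [card_union_of_disjoint hdisj, Fintype.card_fin] using hsized.card_le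
  have hshadow := card_mul_add_le_card_shadow_iterate hcompls (compls_nonempty.2 hne)
    (by rwa [card_compls])
  rw [card_compls] at hshadow
  linear_combination (a + 1) * hunion + hshadow

theorem exists_map_eq_of_subset_powersetCard_map {α β : Type*} [Fintype α] {f : α ↪ β} {r : ℕ}
    {𝒜 : Finset (Finset β)} (h𝒜 : 𝒜 ⊆ powersetCard r (univ.map f)) :
    ∃ 𝒜' : Finset (Finset α),
      (𝒜' : Set (Finset α)).Sized r ∧ 𝒜 = 𝒜'.map (mapEmbedding f).toEmbedding := by
  rw [powersetCard_map] at h𝒜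
  obtain ⟨𝒜', h𝒜', rfl⟩ := subset_map_iff.1 h𝒜
  exact ⟨𝒜', subset_powersetCard_univ_iff.1 h𝒜', rfl⟩

theorem card_mul_add_le_of_cross_intersecting {α : Type*} {Y : Finset α}
    (hY : #Y = 2 * a + j + 5) {𝒜 ℬ : Finset (Finset α)} (h𝒜 : 𝒜 ⊆ powersetCard (a + 2) Y)
    (hℬ : ℬ ⊆ powersetCard (a + 3) Y) (hcross : ∀ A ∈ 𝒜, ∀ B ∈ ℬ, ¬Disjoint A B)
    (hne : ℬ.Nonempty) (hcard : #ℬ ≤ (2 * a + j + 2).choose a) :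
    #𝒜 * (a + 1) + #ℬ * (a + j + 1) + (a + j + 2).choose (a + 2) * (a + 1)
      ≤ (2 * a + j + 5).choose (a + 2) * (a + 1) + (a + j + 1) := by
  obtain ⟨f, rfl⟩ : ∃ f : Fin (2 * a + j + 5) ↪ α, univ.map f = Y :=
    ⟨(Y.equivFinOfCardEq hY).symm.toEmbedding.trans (.subtype _), by
      rw [← map_map, map_univ_equiv, univ_eq_attach, attach_map_val]⟩
  obtain ⟨𝒜', h𝒜', rfl⟩ := exists_map_eq_of_subset_powersetCard_map h𝒜
  obtain ⟨ℬ', hℬ', rfl⟩ := exists_map_eq_of_subset_powersetCard_map hℬ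
  rw [card_map] at hcard ⊢
  rw [card_map]
  exact card_mul_add_le_of_cross_intersecting_fin h𝒜' hℬ'
    (fun A hA B hB hAB => hcross _ (mem_map_of_mem _ hA) _ (mem_map_of_mem _ hB)
      ((disjoint_map f).2 hAB)) (map_nonempty.1 hne) hcard

theorem card_add_div_mul_card_le_of_cross_intersecting_of_nonempty {α : Type*} {Y : Finset α}
    (hY : #Y = 2 * a + j + 5) {𝒜 ℬ : Finset (Finset α)} (h𝒜 : 𝒜 ⊆ powersetCard (a + 2) Y)
    (hℬ : ℬ ⊆ powersetCard (a + 3) Y) (hcross : ∀ A ∈ 𝒜, ∀ B ∈ ℬ, ¬Disjoint A B)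
    (hne : ℬ.Nonempty) (hcard : #ℬ ≤ (2 * a + j + 2).choose a) :
    (#𝒜 + (a + j + 1) / (a + 1) * #ℬ : ℚ)
      ≤ (2 * a + j + 5).choose (a + 2) - (a + j + 2).choose (a + 2)
        + (a + j + 1) / (a + 1) := by
  have hbound : (#𝒜 * (a + 1) + #ℬ * (a + j + 1) + (a + j + 2).choose (a + 2) * (a + 1) : ℚ)
      ≤ (2 * a + j + 5).choose (a + 2) * (a + 1) + (a + j + 1) := by
    exact_mod_cast card_mul_add_le_of_cross_intersecting hY h𝒜 hℬ hcross hne hcard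
  have hpos : (0 : ℚ) < a + 1 := by positivity
  refine le_of_mul_le_mul_right ?_ hpos
  field_simp
  linarith

theorem add_add_one_le_choose_mul (a j : ℕ) :
    a + j + 1 ≤ (a + j + 2).choose (a + 2) * (a + 1) :=
  calc a + j + 1 ≤ (a + j + 1) * (a + j).choose a :=
        Nat.le_mul_of_pos_right _ (Nat.choose_pos (Nat.le_add_right a j))
    _ = (a + j + 1).choose (a + 1) * (a + 1) := Nat.add_one_mul_choose_eq _ _
    _ ≤ (a + j + 2).choose (a + 2) * (a + 1) :=
        Nat.mul_le_mul_right _ <|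
          (Nat.le_add_right _ _).trans_eq (Nat.choose_succ_succ' (a + j + 1) (a + 1)).symm

theorem card_add_div_mul_card_le_of_cross_intersecting {α : Type*} {Y : Finset α}
    (hY : #Y = 2 * a + j + 5) {𝒜 ℬ : Finset (Finset α)} (h𝒜 : 𝒜 ⊆ powersetCard (a + 2) Y)
    (hℬ : ℬ ⊆ powersetCard (a + 3) Y) (hcross : ∀ A ∈ 𝒜, ∀ B ∈ ℬ, ¬Disjoint A B)
    (hcard : #ℬ ≤ (2 * a + j + 2).choose a) :
    (#𝒜 + (a + j + 1) / (a + 1) * #ℬ : ℚ) ≤ (2 * a + j + 5).choose (a + 2) := by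
  rcases ℬ.eq_empty_or_nonempty with rfl | hne
  · rw [card_empty, Nat.cast_zero, mul_zero, add_zero, ← hY, ← card_powersetCard]
    exact_mod_cast card_le_card h𝒜
  · have hweight : ((a + j + 1) / (a + 1) : ℚ) ≤ (a + j + 2).choose (a + 2) := by
      rw [div_le_iff₀ (by positivity)]
      exact_mod_cast add_add_one_le_choose_mul a j
    linarith [card_add_div_mul_card_le_of_cross_intersecting_of_nonempty hY h𝒜 hℬ hcross hne hcard]

end CrossIntersecting

section Diversity

variable {α : Type*} [DecidableEq α] {F : Finset (Finset α)} {X : Finset α} {x : α} {r : ℕ}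

theorem memberSubfamily_subset_powersetCard_erase (hF : F ⊆ powersetCard (r + 1) X) :
    F.memberSubfamily x ⊆ powersetCard r (X.erase x) := by
  intro A hA
  obtain ⟨hxA, hx⟩ := mem_memberSubfamily.1 hA
  obtain ⟨hsub, hcard⟩ := mem_powersetCard.1 (hF hxA)
  rw [card_insert_of_notMem hx, Nat.add_right_cancel_iff] at hcard
  exact mem_powersetCard.2 ⟨subset_erase.2 ⟨(subset_insert x A).trans hsub, hx⟩, hcard⟩

theorem nonMemberSubfamily_subset_powersetCard_erase (hF : F ⊆ powersetCard r X) :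
    F.nonMemberSubfamily x ⊆ powersetCard r (X.erase x) := by
  intro B hB
  obtain ⟨hBF, hx⟩ := mem_nonMemberSubfamily.1 hB
  obtain ⟨hsub, hcard⟩ := mem_powersetCard.1 (hF hBF)
  exact mem_powersetCard.2 ⟨subset_erase.2 ⟨hsub, hx⟩, hcard⟩

theorem not_disjoint_of_mem_memberSubfamily_of_mem_nonMemberSubfamily
    (hint : ∀ A ∈ F, ∀ B ∈ F, (A ∩ B).Nonempty) {A B : Finset α}
    (hA : A ∈ F.memberSubfamily x) (hB : B ∈ F.nonMemberSubfamily x) : ¬Disjoint A B := by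
  obtain ⟨hBF, hx⟩ := mem_nonMemberSubfamily.1 hB
  intro hAB
  exact not_disjoint_iff_nonempty_inter.2 (hint _ (mem_memberSubfamily.1 hA).1 B hBF)
    (disjoint_insert_left.2 ⟨hx, hAB⟩)

theorem weighted_diversity_bound_general {n k : ℕ} (hk : 3 ≤ k) (hnk : 2 * k ≤ n) (hX : #X = n)
    (hF : F ⊆ powersetCard k X) (hint : ∀ A ∈ F, ∀ B ∈ F, (A ∩ B).Nonempty) (hx : x ∈ X)
    (hdiv : #(F.nonMemberSubfamily x) ≤ (n - 4).choose (k - 3)) :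
    (#(F.memberSubfamily x) + ((n - k - 2) / (k - 2)) * #(F.nonMemberSubfamily x) : ℚ)
        ≤ (n - 1).choose (k - 1) ∧
    ((F.nonMemberSubfamily x).Nonempty →
      (#(F.memberSubfamily x) + ((n - k - 2) / (k - 2)) * #(F.nonMemberSubfamily x) : ℚ)
        ≤ (n - 1).choose (k - 1) - (n - k - 1).choose (k - 1) + (n - k - 2) / (k - 2)) := by
  obtain ⟨a, rfl⟩ := Nat.exists_eq_add_of_le' hk
  obtain ⟨j, rfl⟩ := Nat.exists_eq_add_of_le hnk
  have hY : #(X.erase x) = 2 * a + j + 5 := by rw [card_erase_of_mem hx]; omega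
  have h𝒜 : F.memberSubfamily x ⊆ powersetCard (a + 2) (X.erase x) :=
    memberSubfamily_subset_powersetCard_erase hF
  have hℬ : F.nonMemberSubfamily x ⊆ powersetCard (a + 3) (X.erase x) :=
    nonMemberSubfamily_subset_powersetCard_erase hF
  have hcross (A) (hA : A ∈ F.memberSubfamily x) (B) (hB : B ∈ F.nonMemberSubfamily x) :
      ¬Disjoint A B := not_disjoint_of_mem_memberSubfamily_of_mem_nonMemberSubfamily hint hA hB
  have h₁ : 2 * (a + 3) + j - 1 = 2 * a + j + 5 := by omega
  have h₂ : 2 * (a + 3) + j - (a + 3) - 1 = a + j + 2 := by omega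
  have h₃ : 2 * (a + 3) + j - 4 = 2 * a + j + 2 := by omega
  have hw : (((2 * (a + 3) + j : ℕ) - (a + 3 : ℕ) - 2) / ((a + 3 : ℕ) - 2) : ℚ)
      = (a + j + 1) / (a + 1) := by
    push_cast
    congr 1 <;> ring
  rw [h₃, Nat.add_sub_cancel] at hdiv
  rw [hw, h₁, h₂, show a + 3 - 1 = a + 2 from rfl]
  exact ⟨card_add_div_mul_card_le_of_cross_intersecting hY h𝒜 hℬ hcross hdiv, fun hne =>
    card_add_div_mul_card_le_of_cross_intersecting_of_nonempty hY h𝒜 hℬ hcross hne hdiv⟩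

theorem exists_mem_Icc_card_memberSubfamily_eq_maxDeg {n : ℕ} (hn : 1 ≤ n)
    (F : Finset (Finset ℕ)) :
    ∃ x ∈ Icc 1 n,
      #(F.memberSubfamily x) = maxDeg n F ∧ #(F.nonMemberSubfamily x) = diversity n F := by
  obtain ⟨x, hx, hmax⟩ := exists_mem_eq_sup (Icc 1 n) (nonempty_Icc.2 hn) (deg F)
  have hsum := card_memberSubfamily_add_card_nonMemberSubfamily x F
  have hdeg : #(F.memberSubfamily x) = deg F x :=
    Nat.add_right_cancel (hsum.trans (card_filter_add_card_filter_not (x ∈ ·)).symm)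
  have hmaxDeg : #(F.memberSubfamily x) = maxDeg n F := hdeg.trans hmax.symm
  exact ⟨x, hx, hmaxDeg, by rw [diversity, ← hmaxDeg, ← hsum, Nat.add_sub_cancel_left]⟩

end Diversity

/-- Weighted diversity bound: for `n > 2k ≥ 6` and intersecting `F ⊆ C([n],k)` with
`γ(F) ≤ C(n-4,k-3)`, we have `Δ(F) + ((n-k-2)/(k-2))·γ(F) ≤ C(n-1,k-1)`; if moreover `F`
is non-trivial, then
`Δ(F) + ((n-k-2)/(k-2))·γ(F) ≤ C(n-1,k-1) - C(n-k-1,k-1) + (n-k-2)/(k-2)`. -/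
theorem weighted_diversity_bound (n k : ℕ) (hk : 3 ≤ k) (hnk : 2 * k < n)
    (F : Finset (Finset ℕ)) (hF : F ⊆ (Finset.Icc 1 n).powersetCard k)
    (hint : ∀ A ∈ F, ∀ B ∈ F, (A ∩ B).Nonempty)
    (hdiv : diversity n F ≤ (n - 4).choose (k - 3)) :
    (maxDeg n F : ℚ) + (((n : ℚ) - k - 2) / ((k : ℚ) - 2)) * (diversity n F : ℚ)
        ≤ ((n - 1).choose (k - 1) : ℚ) ∧
    ((∀ x : ℕ, ∃ S ∈ F, x ∉ S) →
      (maxDeg n F : ℚ) + (((n : ℚ) - k - 2) / ((k : ℚ) - 2)) * (diversity n F : ℚ)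
        ≤ ((n - 1).choose (k - 1) : ℚ) - ((n - k - 1).choose (k - 1) : ℚ)
          + ((n : ℚ) - k - 2) / ((k : ℚ) - 2)) := by
  obtain ⟨x, hx, hmax, hγ⟩ := exists_mem_Icc_card_memberSubfamily_eq_maxDeg (by omega : 1 ≤ n) F
  rw [← hγ] at hdiv
  rw [← hmax, ← hγ]
  obtain ⟨hbound, hnontrivial⟩ :=
    weighted_diversity_bound_general hk hnk.le (Nat.card_Icc 1 n) hF hint hx hdiv
  refine ⟨hbound, fun hnt => hnontrivial ?_⟩
  obtain ⟨S, hS, hxS⟩ := hnt x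
  exact ⟨S, mem_nonMemberSubfamily.2 ⟨hS, hxS⟩⟩
end
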